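/- Let G be a grading group of the fusion category Rep(H*) and let M and N be any two subgroups of G. Then (H(M), H(N)) is a Mackey pair of Hopf subalgebras of H. -/

import Mathlib

open TensorProduct

namespace MackeyPaper

noncomputable section

universe v

variable (k : Type) [Field k] [CharZero k] [IsAlgClosed k]
variable (H : Type) [Ring H] [HopfAlgebra k H]

/-- A subcoalgebra of `H`: a `k`-subspace `C` with `Δ(C) ⊆ C ⊗ C`. -/
def IsSubcoalgebra (C : Submodule k H) : Prop :=
  ∀ c ∈ C, Coalgebra.comul (R := k) c ∈
    LinearMap.range (TensorProduct.map C.subtype C.subtype)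

/-- A simple (nonzero, minimal) subcoalgebra of `H`. -/
def IsSimpleSubcoalgebra (C : Submodule k H) : Prop :=
  IsSubcoalgebra k H C ∧ C ≠ ⊥ ∧
    ∀ D : Submodule k H, D ≤ C → IsSubcoalgebra k H D → D ≠ ⊥ → D = C

/-- A Hopf subalgebra of `H`: a subalgebra which is a subcoalgebra and is
stable under the antipode. -/
def IsHopfSubalgebra (K : Subalgebra k H) : Prop :=
  IsSubcoalgebra k H K.toSubmodule ∧ ∀ x ∈ K, HopfAlgebra.antipode (R := k) x ∈ K

/-- `Λ` is the (two-sided) idempotent integral of the Hopf subalgebra `K`,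
i.e. the integral normalized by `ε(Λ) = 1`. -/
def IsIdempotentIntegral (K : Subalgebra k H) (Λ : H) : Prop :=
  Λ ∈ K ∧ Coalgebra.counit (R := k) Λ = 1 ∧
    ∀ x ∈ K, x * Λ = Coalgebra.counit (R := k) x • Λ ∧
      Λ * x = Coalgebra.counit (R := k) x • Λ

/-- A cocommutative element of `H`; the cocommutative elements of `H` form
the character ring `C(H^*)`. -/
def IsCocomm (x : H) : Prop :=
  (TensorProduct.comm k H H) (Coalgebra.comul (R := k) x) = Coalgebra.comul (R := k) x

/-- The character ring `C(H^*)`, i.e. the space of cocommutative elements of `H`,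
as a `k`-subspace of `H`. -/
def charRing : Submodule k H :=
  LinearMap.ker ((TensorProduct.comm k H H).toLinearMap ∘ₗ Coalgebra.comul (R := k)
      - Coalgebra.comul (R := k))

/-- `d` is the irreducible character (of `H^*`) associated to the simple
subcoalgebra `C`: the unique cocommutative element of `C` whose counit is the
positive square root of `dim_k C`. -/
def IsCharacterOf (d : H) (C : Submodule k H) : Prop :=
  d ∈ C ∧ IsCocomm k H d ∧
    Coalgebra.counit (R := k) d = ((Nat.sqrt (Module.finrank k ↥C) : ℕ) : k)

/-- The right coset `CK` of a subcoalgebra `C`, i.e. the subspace `C·K`. -/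
def CKsub (K : Subalgebra k H) (C : Submodule k H) : Submodule k H :=
  C * K.toSubmodule

/-- The conjugate Hopf subalgebra `ᶜK` of `K` by a simple subcoalgebra `C`
(with associated irreducible character `c`): the span of all simple
subcoalgebras of `H` whose irreducible character `d` satisfies
`d·c·Λ_K = ε(d)·c·Λ_K`.  (The condition is stated for all cocommutative
elements of `C` resp. `D`; this is equivalent, since the cocommutative
elements of a simple subcoalgebra are exactly the scalar multiples of its
irreducible character.) -/
def conjK (K : Subalgebra k H) (Λ : H) (C : Submodule k H) : Submodule k H :=
  sSup {D : Submodule k H | IsSimpleSubcoalgebra k H D ∧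
    ∀ d ∈ D, IsCocomm k H d → ∀ c ∈ C, IsCocomm k H c →
      d * (c * Λ) = Coalgebra.counit (R := k) d • (c * Λ)}

/-- A complete irredundant system of representatives (by simple subcoalgebras)
of the double cosets `L\H/K`.  (Taking `L = ⊥` gives a system of
representatives of the right cosets `H/K`.) -/
def IsDoubleCosetReps (L K : Subalgebra k H) {ι : Type} (rep : ι → Submodule k H) : Prop :=
  (∀ i, IsSimpleSubcoalgebra k H (rep i)) ∧
  (∀ i j, L.toSubmodule * rep i * K.toSubmodule = L.toSubmodule * rep j * K.toSubmodule
      → i = j) ∧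
  (∀ C : Submodule k H, IsSimpleSubcoalgebra k H C →
      ∃ i, C ≤ L.toSubmodule * rep i * K.toSubmodule)

section Ind

variable (K : Subalgebra k H) (M : Type v) [AddCommGroup M] [Module k M]
  [Module ↥K M] [IsScalarTower k ↥K M]

/-- The relations defining the induced module `H ⊗_K M` as a quotient of
`H ⊗_k M`: the `H`-submodule generated by the elements `a ⊗ m - 1 ⊗ a·m`
for `a ∈ K` (equivalently, spanned by all `h·a ⊗ m - h ⊗ a·m`). -/
def indRel : Submodule H (H ⊗[k] M) :=
  Submodule.span H {z | ∃ (a : ↥K) (m : M),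
    z = (a : H) ⊗ₜ[k] m - (1 : H) ⊗ₜ[k] (a • m)}

/-- The induced module `M↑_K^H = H ⊗_K M`, a left `H`-module. -/
abbrev Ind := (H ⊗[k] M) ⧸ indRel k H K M

variable (C : Submodule k H)

/-- The underlying space `CK ⊗_k M` of which the conjugate module `ᶜM` is a
quotient. -/
def CKM : Type _ := ↥(CKsub k H K C) ⊗[k] M

instance : AddCommGroup (CKM k H K M C) :=
  inferInstanceAs (AddCommGroup (↥(CKsub k H K C) ⊗[k] M))

instance : Module k (CKM k H K M C) :=
  inferInstanceAs (Module k (↥(CKsub k H K C) ⊗[k] M))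

/-- The pure tensor `x ⊗ m` as an element of `CK ⊗_k M`. -/
def ckmk (x : ↥(CKsub k H K C)) (m : M) : CKM k H K M C := x ⊗ₜ[k] m

/-- The relations defining the conjugate module `ᶜM = CK ⊗_K M` as a quotient
of `CK ⊗_k M`: `x·a ⊗ m - x ⊗ a·m` for `a ∈ K`. -/
def conjRel : Submodule k (CKM k H K M C) :=
  Submodule.span k {z | ∃ (x : ↥(CKsub k H K C)) (a : ↥K) (m : M)
    (hxa : (x : H) * (a : H) ∈ CKsub k H K C),
    z = ckmk k H K M C ⟨(x : H) * (a : H), hxa⟩ m - ckmk k H K M C x (a • m)}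

/-- The conjugate module `ᶜM := CK ⊗_K M`. -/
abbrev ConjM := CKM k H K M C ⧸ conjRel k H K M C

/-- The canonical copy of the conjugate module `ᶜM = CK ⊗_K M` inside
`H ⊗_K M` (the image of `CK ⊗_K M` under multiplication; this is indeed a
copy of `ᶜM` since `H` is a free right `K`-module and `CK` is one of the
coset summands). -/
def conjMsub : Submodule k (Ind k H K M) :=
  Submodule.span k {z | ∃ (x : H) (_ : x ∈ CKsub k H K C) (m : M),
    z = Submodule.Quotient.mk (x ⊗ₜ[k] m)}

end Ind

section Comp

variable (L K : Subalgebra k H) (Λ : H) (C : Submodule k H)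
variable (M : Type v) [AddCommGroup M] [Module k M] [Module ↥K M] [IsScalarTower k ↥K M]

/-- The underlying space `L ⊗_k (CK ⊗_k M)`. -/
def LCM : Type _ := ↥L ⊗[k] CKM k H K M C

instance : AddCommGroup (LCM k H L K C M) :=
  inferInstanceAs (AddCommGroup (↥L ⊗[k] CKM k H K M C))

instance : Module k (LCM k H L K C M) :=
  inferInstanceAs (Module k (↥L ⊗[k] CKM k H K M C))

/-- The pure tensor `l ⊗ w` as an element of `L ⊗_k (CK ⊗_k M)`. -/
def lcmk (l : ↥L) (w : CKM k H K M C) : LCM k H L K C M := l ⊗ₜ[k] w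

/-- The relations defining `L ⊗_{L ∩ ᶜK} ᶜM` as a quotient of
`L ⊗_k (CK ⊗_k M)`: the balancedness relations over `L ∩ ᶜK` (first set),
together with (the image of) the relations defining `ᶜM = CK ⊗_K M`
(second set). -/
def compRel : Submodule k (LCM k H L K C M) :=
  Submodule.span k
    ({z | ∃ (l : ↥L) (a : H) (haL : a ∈ L) (_ : a ∈ conjK k H K Λ C)
        (x : ↥(CKsub k H K C)) (m : M) (hax : a * (x : H) ∈ CKsub k H K C),
        z = lcmk k H L K C M ⟨(l : H) * a, mul_mem l.2 haL⟩ (ckmk k H K M C x m)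
          - lcmk k H L K C M l (ckmk k H K M C ⟨a * (x : H), hax⟩ m)} ∪
     {z | ∃ (l : ↥L) (x : ↥(CKsub k H K C)) (a : ↥K) (m : M)
        (hxa : (x : H) * (a : H) ∈ CKsub k H K C),
        z = lcmk k H L K C M l (ckmk k H K M C ⟨(x : H) * (a : H), hxa⟩ m)
          - lcmk k H L K C M l (ckmk k H K M C x (a • m))})

/-- The module `L ⊗_{L ∩ ᶜK} ᶜM` (a left `L`-module via multiplication on the
first tensor factor). -/
abbrev Comp := LCM k H L K C M ⧸ compRel k H L K Λ C M

end Comp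

open DirectSum

section Mackey

variable (L K : Subalgebra k H) (Λ : H)

/-- The Mackey isomorphism property for the pair `(L, K)` at the `K`-module
`M`: for any system of double coset representatives, the left-multiplication
map `⊕_C L ⊗_{L ∩ ᶜK} ᶜM → M↑_K^H↓_L^H`, `l ⊗ v ↦ l·v`, is an isomorphism of
`L`-modules.  (A `k`-linear map satisfying the displayed formula on the
spanning elements is automatically `L`-equivariant for the evident
`L`-actions, so this property is stated for `k`-linear maps.) -/
def MackeyAt (M : Type v) [AddCommGroup M] [Module k M] [Module ↥K M]
    [IsScalarTower k ↥K M] [Module.Finite k M] : Prop :=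
  ∀ (ι : Type) [DecidableEq ι] (rep : ι → Submodule k H),
    IsDoubleCosetReps k H L K rep →
    ∃ π : (⨁ i : ι, Comp k H L K Λ (rep i) M) →ₗ[k] Ind k H K M,
      Function.Bijective π ∧
      ∀ (i : ι) (l : ↥L) (x : ↥(CKsub k H K (rep i))) (m : M),
        π (DirectSum.of (fun i => Comp k H L K Λ (rep i) M) i
            (Submodule.Quotient.mk (lcmk k H L K (rep i) M l (ckmk k H K M (rep i) x m)))) =
          Submodule.Quotient.mk (((l : H) * (x : H)) ⊗ₜ[k] m)

/-- `(L, K)` is a Mackey pair of Hopf subalgebras of `H` (here `Λ` is the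
idempotent integral of `K`): for every finite-dimensional `K`-module `M` the
left-multiplication homomorphism `π_M` is an isomorphism. -/
def IsMackeyPair : Prop :=
  ∀ (M : Type v) [AddCommGroup M] [Module k M] [Module ↥K M]
    [IsScalarTower k ↥K M] [Module.Finite k M], MackeyAt k H L K Λ M

end Mackey


section Statements

variable [FiniteDimensional k H] [IsSemisimpleRing H]

/-- A `G`-grading on the fusion category `Rep(H^*)`, described via the
canonical bijection between simple objects of `Rep(H^*)` and simple
subcoalgebras of `H`: a degree function on simple subcoalgebras such that
every simple subcoalgebra of a product `C·D` (i.e. every simple constituent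
of the corresponding tensor product of comodules) has degree
`deg C · deg D`. -/
def IsGrading (G : Type) [Group G] (deg : Submodule k H → G) : Prop :=
  ∀ C D E : Submodule k H, IsSimpleSubcoalgebra k H C →
    IsSimpleSubcoalgebra k H D → IsSimpleSubcoalgebra k H E →
    E ≤ C * D → deg E = deg C * deg D

/-- For a subset `S ⊆ G`, the subcoalgebra `H(S)` of `H` spanned by the simple
subcoalgebras whose degree lies in `S`. -/
def Hgr (G : Type) [Group G] (deg : Submodule k H → G) (S : Set G) : Submodule k H :=
  sSup {C : Submodule k H | IsSimpleSubcoalgebra k H C ∧ deg C ∈ S}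

end Statements

end

end MackeyPaper

namespace MackeyPaper
noncomputable section

section Sweedler

open Coalgebra HopfAlgebra

/-- Unbundled linearity, as a `fun_prop` predicate. -/
@[fun_prop]
structure Lin (k : Type*) {V W : Type*} [Field k] [AddCommGroup V] [Module k V]
    [AddCommGroup W] [Module k W] (f : V → W) : Prop where
  map_add : ∀ x y, f (x + y) = f x + f y
  map_smul : ∀ (c : k) x, f (c • x) = c • f x

variable {k H V W U : Type*} [Field k] [Ring H] [HopfAlgebra k H] [AddCommGroup V]

variable (k) in
/-- Sweedler summation: `sw k f h = ∑ f h₁ h₂`. -/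
def sw (f : H → H → V) (h : H) : V := ∑ p ∈ (ℛ k h).index, f p.1 p.2

lemma sw_congr {f g : H → H → V} (h : H) (hfg : ∀ a b, f a b = g a b) : sw k f h = sw k g h := by
  obtain rfl : f = g := by ext a b; exact hfg a b
  rfl

lemma sw_comm (f : H → H → H → H → V) (x y : H) :
    sw k (fun a b => sw k (fun c d => f a b c d) y) x =
      sw k (fun c d => sw k (fun a b => f a b c d) x) y :=
  Finset.sum_comm

variable [Module k V]
  [AddCommGroup W] [Module k W] [AddCommGroup U] [Module k U]

@[fun_prop]
lemma Lin.id' : Lin k (fun x : V => x) := ⟨fun _ _ => rfl, fun _ _ => rfl⟩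

@[fun_prop]
lemma Lin.comp' {f : W → U} {g : V → W} (hf : Lin k f) (hg : Lin k g) :
    Lin k (fun x => f (g x)) :=
  ⟨fun x y => by rw [hg.map_add, hf.map_add], fun x y => by rw [hg.map_smul, hf.map_smul]⟩

@[fun_prop]
lemma Lin.coe (f : V →ₗ[k] W) : Lin k (fun x => f x) := ⟨by simp, by simp⟩

@[fun_prop]
lemma Lin.tmul_left {g : V → W} (hg : Lin k g) (u : U) : Lin k (fun x => g x ⊗ₜ[k] u) :=
  ⟨fun x y => by rw [hg.map_add, add_tmul], fun x y => by rw [hg.map_smul, smul_tmul']⟩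

@[fun_prop]
lemma Lin.tmul_right {g : V → W} (hg : Lin k g) (u : U) : Lin k (fun x => u ⊗ₜ[k] g x) :=
  ⟨fun x y => by rw [hg.map_add, tmul_add], fun x y => by rw [hg.map_smul, tmul_smul]⟩

@[fun_prop]
lemma Lin.smul_left {g : V → k} (hg : Lin k g) (u : U) : Lin k (fun x => g x • u) :=
  ⟨fun x y => by rw [hg.map_add, add_smul], fun x y => by rw [hg.map_smul, smul_assoc]⟩

@[fun_prop]
lemma Lin.smul_right {g : V → U} (hg : Lin k g) (u : k) : Lin k (fun x => u • g x) :=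
  ⟨fun x y => by rw [hg.map_add, smul_add], fun x y => by rw [hg.map_smul, smul_comm]⟩

variable {A : Type*} [Ring A] [Algebra k A]

@[fun_prop]
lemma Lin.mul_left {g : V → A} (hg : Lin k g) (u : A) : Lin k (fun x => g x * u) :=
  ⟨fun x y => by rw [hg.map_add, add_mul], fun x y => by rw [hg.map_smul, smul_mul_assoc]⟩

@[fun_prop]
lemma Lin.mul_right {g : V → A} (hg : Lin k g) (u : A) : Lin k (fun x => u * g x) :=
  ⟨fun x y => by rw [hg.map_add, mul_add], fun x y => by rw [hg.map_smul, mul_smul_comm]⟩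

/-- The bundled linear map of a `Lin` function. -/
def Lin.toLinearMap {f : V → W} (hf : Lin k f) : V →ₗ[k] W where
  toFun := f
  map_add' := hf.map_add
  map_smul' := hf.map_smul

@[simp]
lemma Lin.toLinearMap_apply {f : V → W} (hf : Lin k f) (x : V) : hf.toLinearMap x = f x := rfl

lemma Lin.map_sum {f : V → W} (hf : Lin k f) {ι : Type*} (s : Finset ι) (v : ι → V) :
    f (∑ i ∈ s, v i) = ∑ i ∈ s, f (v i) :=
  _root_.map_sum hf.toLinearMap v s

lemma sw_eq_lift (f : H →ₗ[k] H →ₗ[k] V) (h : H) :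
    sw k (fun a b => f a b) h = TensorProduct.lift f (comul h) := by
  rw [← (ℛ k h).eq, map_sum]
  rfl

lemma exists_bilinear {f : H → H → V} (h1 : ∀ b, Lin k (fun a => f a b))
    (h2 : ∀ a, Lin k (fun b => f a b)) : ∃ F : H →ₗ[k] H →ₗ[k] V, f = fun a b => F a b :=
  ⟨LinearMap.mk₂ k f (fun _ _ _ => (h1 _).map_add _ _) (fun _ _ _ => (h1 _).map_smul _ _)
    (fun _ _ _ => (h2 _).map_add _ _) (fun _ _ _ => (h2 _).map_smul _ _), rfl⟩

@[fun_prop]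
lemma Lin.sw_fun {f : U → H → H → V} (hf : ∀ a b, Lin k (fun x => f x a b)) (h : H) :
    Lin k (fun x => sw k (f x) h) :=
  ⟨fun x y => by simp [sw, (hf _ _).map_add, Finset.sum_add_distrib],
    fun x y => by simp [sw, (hf _ _).map_smul, Finset.smul_sum]⟩

@[fun_prop]
lemma Lin.sw_arg {f : H → H → V} (h1 : ∀ b, Lin k (fun a => f a b))
    (h2 : ∀ a, Lin k (fun b => f a b)) {g : U → H} (hg : Lin k g) :
    Lin k (fun x => sw k f (g x)) := by
  obtain ⟨F, rfl⟩ := exists_bilinear h1 h2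
  simp only [sw_eq_lift]
  fun_prop

lemma sw_tmul (h : H) : sw k (fun a b => a ⊗ₜ[k] b) h = comul h := (ℛ k h).eq

/-- Sweedler sums may be computed with any presentation of the coproduct. -/
lemma sw_eq_sum {f : H → H → V} (h1 : ∀ b, Lin k (fun a => f a b))
    (h2 : ∀ a, Lin k (fun b => f a b)) (h : H) {ι : Type*} (s : Finset ι) (x y : ι → H)
    (hs : comul h = ∑ i ∈ s, x i ⊗ₜ[k] y i) : sw k f h = ∑ i ∈ s, f (x i) (y i) := by
  obtain ⟨F, rfl⟩ := exists_bilinear h1 h2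
  simp [sw_eq_lift, hs]

/-- Pushing a linear map inside a Sweedler sum. -/
lemma Lin.map_sw {L : V → W} (hL : Lin k L) (f : H → H → V) (h : H) :
    L (sw k f h) = sw k (fun a b => L (f a b)) h :=
  hL.map_sum _ _

lemma mul_sw (z : H) (f : H → H → H) (h : H) : z * sw k f h = sw k (fun a b => z * f a b) h :=
  Finset.mul_sum _ _ _

/-- Coassociativity. -/
lemma sw_assoc {t : H → H → H → V} (h1 : ∀ b c, Lin k (fun a => t a b c))
    (h2 : ∀ a c, Lin k (fun b => t a b c)) (h3 : ∀ a b, Lin k (fun c => t a b c)) (h : H) :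
    sw k (fun x y => sw k (fun a b => t x a b) y) h =
      sw k (fun x y => sw k (fun a b => t a b y) x) h := by
  let T : H →ₗ[k] H →ₗ[k] H →ₗ[k] V :=
    { toFun := fun a => LinearMap.mk₂ k (t a) (fun _ _ _ => (h2 _ _).map_add _ _)
        (fun _ _ _ => (h2 _ _).map_smul _ _) (fun _ _ _ => (h3 _ _).map_add _ _)
        (fun _ _ _ => (h3 _ _).map_smul _ _)
      map_add' := fun x y => by ext; simp [(h1 _ _).map_add]
      map_smul' := fun x y => by ext; simp [(h1 _ _).map_smul] }
  have key := congrArg (TensorProduct.lift ((TensorProduct.lift.equiv (.id k) H H V).toLinearMap ∘ₗ T))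
    (sum_tmul_tmul_eq (ℛ k h) (fun i => ℛ k _) (fun i => ℛ k _))
  simp only [map_sum] at key
  exact key.symm

lemma sw_counit_left {f : H → V} (hf : Lin k f) (h : H) :
    sw k (fun a b => counit (R := k) a • f b) h = f h := by
  have := congrArg f (sum_counit_smul (ℛ k h))
  rw [hf.map_sum] at this
  simp only [hf.map_smul] at this
  exact this

lemma sw_counit_right {f : H → V} (hf : Lin k f) (h : H) :
    sw k (fun a b => counit (R := k) b • f a) h = f h := by
  have := congrArg (TensorProduct.lift ((LinearMap.lsmul k V).flip ∘ₗ hf.toLinearMap))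
    (sum_tmul_counit_eq (ℛ k h))
  simp only [map_sum, TensorProduct.lift.tmul, LinearMap.comp_apply, LinearMap.flip_apply,
    LinearMap.lsmul_apply, one_smul, Lin.toLinearMap_apply] at this
  exact this

lemma sw_antipode_mul {f : H → V} (hf : Lin k f) (h : H) :
    sw k (fun a b => f (antipode k a * b)) h = counit (R := k) h • f 1 := by
  have := congrArg f (sum_antipode_mul_eq_smul (ℛ k h))
  rwa [hf.map_sum, hf.map_smul] at this

lemma sw_mul_antipode {f : H → V} (hf : Lin k f) (h : H) :
    sw k (fun a b => f (a * antipode k b)) h = counit (R := k) h • f 1 := by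
  have := congrArg f (sum_mul_antipode_eq_smul (ℛ k h))
  rwa [hf.map_sum, hf.map_smul] at this

lemma sw_mul {f : H → H → V} (h1 : ∀ b, Lin k (fun a => f a b))
    (h2 : ∀ a, Lin k (fun b => f a b)) (x y : H) :
    sw k f (x * y) = sw k (fun a b => sw k (fun c d => f (a * c) (b * d)) y) x := by
  rw [sw_eq_sum h1 h2 (x * y) ((ℛ k x).index ×ˢ (ℛ k y).index)
    (fun p => p.1.1 * p.2.1) (fun p => p.1.2 * p.2.2), Finset.sum_product]
  · rfl
  · rw [Bialgebra.comul_mul, ← (ℛ k x).eq, ← (ℛ k y).eq, Finset.sum_mul_sum, Finset.sum_product]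
    simp only [Algebra.TensorProduct.tmul_mul_tmul]
    rfl

lemma sw_one {f : H → H → V} (h1 : ∀ b, Lin k (fun a => f a b))
    (h2 : ∀ a, Lin k (fun b => f a b)) : sw k f 1 = f 1 1 := by
  rw [sw_eq_sum h1 h2 1 {()} (fun _ => 1) (fun _ => 1)] <;> simp
  rfl

/-- The antipode reverses the coproduct. -/
lemma comul_antipode (x : H) :
    comul (R := k) (antipode k x) = sw k (fun a b => antipode k b ⊗ₜ[k] antipode k a) x := by
  let i₁ : H →ₐ[k] H ⊗[k] H := Algebra.TensorProduct.includeLeft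
  let i₂ : H →ₐ[k] H ⊗[k] H := Algebra.TensorProduct.includeRight
  let F : (H →ₐ[k] H ⊗[k] H) → (H →ₗ[k] H) → WithConv (H →ₗ[k] H ⊗[k] H) :=
    fun i f => WithConv.toConv (i.toLinearMap ∘ₗ f)
  have hF : ∀ i, F i (antipode k) * F i .id = 1 := by
    intro i
    have := LinearMap.algHom_comp_convMul_distrib i (WithConv.toConv (antipode k (A := H)))
      (WithConv.toConv (.id : H →ₗ[k] H))
    rw [LinearMap.antipode_mul_id] at this
    apply WithConv.ext
    refine Eq.trans this.symm ?_
    ext y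
    simp [LinearMap.convOne_def]
  have hδ : F i₁ .id * F i₂ .id = WithConv.toConv (comul (R := k)) := by
    ext y
    rw [(ℛ k y).convMul_apply]
    simp [F, i₁, i₂, (ℛ k y).eq]
  have hl : (F i₂ (antipode k) * F i₁ (antipode k)) * WithConv.toConv (comul (R := k)) = 1 := by
    rw [← hδ, mul_assoc, ← mul_assoc (F i₁ _), hF, one_mul, hF]
  have := left_inv_eq_right_inv hl LinearMap.comul_right_inv
  have := congrArg (fun f => f.ofConv x) this
  refine this.symm.trans ?_
  rw [(ℛ k x).convMul_apply]
  simp [F, i₁, i₂]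
  rfl

lemma sw_antipode {f : H → H → V} (h1 : ∀ b, Lin k (fun a => f a b))
    (h2 : ∀ a, Lin k (fun b => f a b)) (x : H) :
    sw k f (antipode k x) = sw k (fun a b => f (antipode k b) (antipode k a)) x := by
  obtain ⟨F, rfl⟩ := exists_bilinear h1 h2
  rw [sw_eq_lift, comul_antipode, (Lin.coe _).map_sw]
  rfl

end Sweedler
end
end MackeyPaper

namespace MackeyPaper
noncomputable section

section Integrals

open Coalgebra HopfAlgebra

variable {k H V : Type*} [Field k] [Ring H] [HopfAlgebra k H] [AddCommGroup V] [Module k V]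

local notation "ε" => counit (R := k) (A := H)
local notation "S" => antipode k (A := H)

lemma sw_smul {f : H → H → V} (h1 : ∀ b, Lin k (fun a => f a b))
    (h2 : ∀ a, Lin k (fun b => f a b)) (c : k) (x : H) : sw k f (c • x) = c • sw k f x :=
  (Lin.sw_arg h1 h2 Lin.id').map_smul c x

lemma exists_left_integral (A : Type*) [Ring A] [Algebra k A] [IsSemisimpleRing A]
    (e : A →ₐ[k] k) : ∃ Λ : A, e Λ = 1 ∧ ∀ h, h * Λ = e h • Λ := by
  obtain ⟨J, hJ⟩ := exists_isCompl (RingHom.ker e : Submodule A A)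
  obtain ⟨i, hi, j, hj, hij⟩ := Submodule.mem_sup.1 (hJ.sup_eq_top ▸ Submodule.mem_top (x := (1 : A)))
  have hi' : e i = 0 := hi
  have hj1 : e j = 1 := by rw [← map_one e, ← hij, map_add, hi', zero_add]
  refine ⟨j, hj1, fun h => ?_⟩
  have h1 : h * j - e h • j ∈ J := by
    refine J.sub_mem (J.smul_mem h hj) ?_
    rw [Algebra.smul_def]
    exact J.smul_mem _ hj
  have h2 : h * j - e h • j ∈ RingHom.ker e := by
    rw [RingHom.mem_ker]
    simp [hj1]
  have := (Submodule.mem_bot A).1 (hJ.inf_eq_bot ▸ Submodule.mem_inf.2 ⟨h2, h1⟩)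
  exact sub_eq_zero.1 this

variable (k) in
/-- A normalised two-sided integral. -/
structure IsIntegral₁ (Λ : H) : Prop where
  counit : ε Λ = 1
  mul_left : ∀ h, h * Λ = ε h • Λ
  mul_right : ∀ h, Λ * h = ε h • Λ

variable (k H) in
lemma exists_integral [IsSemisimpleRing H] : ∃ Λ : H, IsIntegral₁ k Λ := by
  obtain ⟨Λ, h1, h2⟩ := exists_left_integral H (Bialgebra.counitAlgHom k H)
  obtain ⟨Λ', h1', h2'⟩ := exists_left_integral Hᵐᵒᵖ
    (AlgHom.fromOpposite (Bialgebra.counitAlgHom k H) fun _ _ => Commute.all _ _)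
  have h3 : ∀ h : H, Λ'.unop * h = ε h • Λ'.unop := fun h =>
    congrArg MulOpposite.unop (h2' (MulOpposite.op h))
  have h4 : Λ'.unop = Λ := by
    have e1 := h2 Λ'.unop
    rw [h3] at e1
    have : ε Λ'.unop = 1 := h1'
    have h1 : ε Λ = 1 := h1
    simpa [this, h1] using e1
  exact ⟨Λ, h1, h2, h4 ▸ h3⟩

/-- The Casimir property of a left integral. -/
lemma casimir {f : H → H → V} (h1 : ∀ b, Lin k (fun a => f a b))
    (h2 : ∀ a, Lin k (fun b => f a b)) {Λ : H} (hΛ : ∀ h, h * Λ = ε h • Λ) (h : H) :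
    sw k (fun a b => f (h * a) (S b)) Λ = sw k (fun a b => f a (S b * h)) Λ := by
  obtain ⟨F, rfl⟩ := exists_bilinear h1 h2
  have e1 : sw k (fun x y => sw k (fun a b => F a (S b * y)) (x * Λ)) h =
      sw k (fun a b => F a (S b * h)) Λ := by
    rw [← sw_counit_left (f := fun h => sw k (fun a b => F a (S b * h)) Λ) (by fun_prop) h]
    refine sw_congr _ fun x y => ?_
    rw [hΛ]
    exact sw_smul (by fun_prop) (by fun_prop) _ _
  rw [← e1]
  have e2 : ∀ x y, sw k (fun a b => F a (S b * y)) (x * Λ) =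
      sw k (fun p q => sw k (fun a b => F (p * a) (S b * (S q * y))) Λ) x := fun x y => by
    refine (sw_mul (by fun_prop) (by fun_prop) _ _).trans ?_
    simp only [antipode_mul_antidistrib, mul_assoc]
  simp only [e2]
  rw [← sw_assoc (t := fun p q y => sw k (fun a b => F (p * a) (S b * (S q * y))) Λ)
    (by fun_prop) (by fun_prop) (by fun_prop)]
  have e3 : ∀ x y, sw k (fun q y => sw k (fun a b => F (x * a) (S b * (S q * y))) Λ) y =
      ε y • sw k (fun a b => F (x * a) (S b)) Λ := fun x y => by
    rw [sw_antipode_mul (f := fun z => sw k (fun a b => F (x * a) (S b * z)) Λ) (by fun_prop)]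
    simp
  simp only [e3]
  rw [sw_counit_right (f := fun x => sw k (fun a b => F (x * a) (S b)) Λ) (by fun_prop)]

variable (k) in
/-- The functional `h ↦ Tr(x ↦ S²(x)h)`. -/
def trInt : H →ₗ[k] k where
  toFun h := LinearMap.trace k H (LinearMap.mulRight k h ∘ₗ S ∘ₗ S)
  map_add' x y := by rw [← map_add]; congr 1; ext; simp [mul_add]
  map_smul' c x := by rw [← map_smul]; congr 1; ext; simp

variable [FiniteDimensional k H]

lemma sw_dual_smul_trInt (φ : H →ₗ[k] k) (h : H) :
    sw k (fun a b => φ b • trInt k a) h = φ 1 • trInt k h := by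
  let F := LinearMap.mulRight k h ∘ₗ S ∘ₗ S
  let b := Module.finBasis k H
  let Δ : _ → H →ₗ[k] H := fun j => (show Lin k fun x => sw k (fun a c => b.coord j c • a) x by
    fun_prop).toLinearMap
  let Q : _ → H →ₗ[k] H := fun j => (show Lin k fun y => sw k (fun a c => φ (S (b j) * c) • a) y by
    fun_prop).toLinearMap
  have hΔ : ∀ (f : H → H → H), (∀ c, Lin k (fun a => f a c)) → (∀ a, Lin k (fun c => f a c)) →
      ∀ x, ∑ j, f (Δ j x) (b j) = sw k f x := by
    intro f h1 h2 x
    have : ∀ j, f (Δ j x) (b j) = sw k (fun a c => f a (b.coord j c • b j)) x := fun j => by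
      simp only [(h2 _).map_smul, ← (h1 _).map_smul, ← (h1 (b j)).map_sw]
      rfl
    simp only [this]
    simp only [sw]
    rw [Finset.sum_comm]
    refine Finset.sum_congr rfl fun p _ => ?_
    rw [← (h2 _).map_sum]
    simp [b.sum_repr]
  have key : ∑ j, Q j ∘ₗ F ∘ₗ Δ j =
      (show Lin k fun x => sw k (fun a c => φ c • (S (S x) * a)) h by fun_prop).toLinearMap := by
    ext x
    simp only [LinearMap.sum_apply, LinearMap.comp_apply]
    refine (hΔ (fun y z => sw k (fun a c => φ (S z * c) • a) (F y)) (by fun_prop) (by fun_prop)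
      x).trans ?_
    have : ∀ y z, sw k (fun a c => φ (S z * c) • a) (F y) =
        sw k (fun p q => sw k (fun a c => φ (S (S q * z) * c) • (S (S p) * a)) h) y := fun y z => by
      change sw k (fun a c => φ (S z * c) • a) (S (S y) * h) = _
      refine (sw_mul (by fun_prop) (by fun_prop) _ _).trans ?_
      refine (sw_antipode (by fun_prop) (by fun_prop) _).trans ?_
      refine (sw_antipode (by fun_prop) (by fun_prop) _).trans ?_
      simp only [antipode_mul_antidistrib, mul_assoc]
    simp only [this]
    rw [← sw_assoc (t := fun p q z => sw k (fun a c => φ (S (S q * z) * c) • (S (S p) * a)) h)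
      (by fun_prop) (by fun_prop) (by fun_prop)]
    have e3 : ∀ p y, sw k (fun q z => sw k (fun a c => φ (S (S q * z) * c) • (S (S p) * a)) h) y =
        ε y • sw k (fun a c => φ c • (S (S p) * a)) h := fun p y => by
      refine (sw_antipode_mul (f := fun t => sw k (fun a c => φ (S t * c) • (S (S p) * a)) h)
        (by fun_prop) y).trans ?_
      simp
    simp only [e3]
    exact sw_counit_right (f := fun p => sw k (fun a c => φ c • (S (S p) * a)) h) (by fun_prop) x
  have key' : ∑ j, Δ j ∘ₗ Q j = φ 1 • LinearMap.id := by
    ext y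
    simp only [LinearMap.sum_apply, LinearMap.comp_apply]
    have : ∀ j, Δ j (Q j y) = sw k (fun a c => φ (S (b j) * c) • Δ j a) y := fun j => by
      simp only [← map_smul]
      exact (Lin.coe (Δ j)).map_sw (fun a c => φ (S (b j) * c) • a) y
    simp only [this, sw]
    rw [Finset.sum_comm]
    refine Eq.trans (b := sw k (fun a c : H => sw k (fun p z : H => φ (S z * c) • p) a) y)
      (Finset.sum_congr rfl fun p _ =>
        hΔ (fun a z => φ (S z * _) • a) (by fun_prop) (by fun_prop) _) ?_
    rw [← sw_assoc (t := fun p z c : H => φ (S z * c) • p) (by fun_prop) (by fun_prop) (by fun_prop)]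
    have : ∀ x y : H, sw k (fun z c => φ (S z * c) • x) y = ε y • (φ 1 • x) := fun x y =>
      sw_antipode_mul (f := fun t => φ t • x) (by fun_prop) y
    simp only [this]
    exact sw_counit_right (f := fun x => φ 1 • x) (by fun_prop) y
  have e := congrArg (LinearMap.trace k H) key
  rw [map_sum] at e
  simp only [← LinearMap.comp_assoc] at e
  have e' : ∀ j, LinearMap.trace k H ((Q j ∘ₗ F) ∘ₗ Δ j) =
      LinearMap.trace k H ((Δ j ∘ₗ Q j) ∘ₗ F) := fun j => by
    rw [LinearMap.trace_comp_comm', LinearMap.comp_assoc]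
  simp only [e'] at e
  have e'' : ∑ j, (Δ j ∘ₗ Q j) ∘ₗ F = (∑ j, Δ j ∘ₗ Q j) ∘ₗ F := by ext; simp
  rw [← map_sum, e'', key', LinearMap.smul_comp, LinearMap.id_comp, map_smul] at e
  refine Eq.trans ?_ e.symm
  simp only [trInt, LinearMap.coe_mk, AddHom.coe_mk, ← map_smul]
  rw [← (Lin.coe (LinearMap.trace k H)).map_sw]
  congr 1
  ext x
  simp [sw]

end Integrals
end
end MackeyPaper

namespace MackeyPaper
noncomputable section

section Larson

open Coalgebra HopfAlgebra

variable {k H : Type*} [Field k] [Ring H] [HopfAlgebra k H]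

local notation "ε" => counit (R := k) (A := H)
local notation "S" => antipode k (A := H)
local notation "ρ" => trInt k (H := H)

variable (k) in
/-- A right integral on `H`. -/
def IsRightInt (τ : H →ₗ[k] k) : Prop := ∀ h, sw k (fun a b => τ a • b) h = τ h • 1

lemma eq_of_dual {x y : H} (h : ∀ φ : H →ₗ[k] k, φ x = φ y) : x = y := by
  rw [← sub_eq_zero, ← Module.forall_dual_apply_eq_zero_iff k]
  intro φ
  rw [map_sub, h, sub_self]

lemma trInt_mul_comm [FiniteDimensional k H] (x y : H) : ρ (x * y) = ρ (S (S y) * x) := by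
  have h1 : LinearMap.mulRight k (x * y) ∘ₗ S ∘ₗ S =
      LinearMap.mulRight k y ∘ₗ (LinearMap.mulRight k x ∘ₗ S ∘ₗ S) := by
    ext z; simp [mul_assoc]
  have h2 : LinearMap.mulRight k (S (S y) * x) ∘ₗ S ∘ₗ S =
      (LinearMap.mulRight k x ∘ₗ S ∘ₗ S) ∘ₗ LinearMap.mulRight k y := by
    ext z; simp [mul_assoc, antipode_mul_antidistrib]
  change LinearMap.trace k H _ = LinearMap.trace k H _
  rw [h1, h2, LinearMap.trace_comp_comm']

lemma trInt_isRightInt [FiniteDimensional k H] : IsRightInt k ρ := fun h => by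
  refine eq_of_dual (k := k) fun φ => ?_
  rw [(Lin.coe φ).map_sw, map_smul, smul_eq_mul, mul_comm, ← smul_eq_mul, ← sw_dual_smul_trInt]
  refine sw_congr _ fun a b => ?_
  rw [map_smul, smul_eq_mul, smul_eq_mul, mul_comm]

lemma trInt_one : ρ 1 = LinearMap.trace k H (S ∘ₗ S) := by
  change LinearMap.trace k H _ = _
  congr 1
  ext; simp

variable {Λ : H} (hΛ : IsIntegral₁ k Λ)
include hΛ

lemma trInt_integral [FiniteDimensional k H] : ρ Λ = 1 := by
  have : LinearMap.mulRight k Λ ∘ₗ S ∘ₗ S = LinearMap.smulRight ε Λ := by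
    ext z; simp [hΛ.mul_left]
  change LinearMap.trace k H _ = _
  rw [this, LinearMap.trace_smulRight, hΛ.counit]

/-- The dual basis formula. -/
lemma sw_rightInt_mul {τ : H →ₗ[k] k} (hτ : IsRightInt k τ) (h : H) :
    sw k (fun a b => τ (h * a) • S b) Λ = τ Λ • h := by
  rw [casimir (f := fun a b => τ a • b) (by fun_prop) (by fun_prop) hΛ.mul_left]
  have := congrArg (fun x => S x * h) (hτ Λ)
  rw [Lin.map_sw (L := fun x => S x * h) (by fun_prop)] at this
  simpa using this

variable [FiniteDimensional k H]

lemma sw_trInt_mul (h : H) : sw k (fun a b => ρ (h * a) • S b) Λ = h := by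
  rw [sw_rightInt_mul hΛ trInt_isRightInt, trInt_integral hΛ, one_smul]

lemma antipode_bijective : Function.Bijective S := by
  have : Function.Surjective S := fun h => ⟨sw k (fun a b => ρ (h * a) • b) Λ, by
    rw [(Lin.coe S).map_sw]
    simpa using sw_trInt_mul hΛ h⟩
  exact ⟨LinearMap.injective_iff_surjective.2 this, this⟩

lemma eq_of_trInt_mul {x y : H} (h : ∀ z, ρ (x * z) = ρ (y * z)) : x = y := by
  rw [← sw_trInt_mul hΛ x, ← sw_trInt_mul hΛ y]
  simp only [h]

/-- Right integrals are unique up to scalars. -/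
lemma IsRightInt.eq_smul {τ : H →ₗ[k] k} (hτ : IsRightInt k τ) : τ = τ Λ • ρ := by
  let Θ : (H →ₗ[k] k) →ₗ[k] H := (show Lin k fun f : H →ₗ[k] k => sw k (fun a b => f a • S b) Λ from
    Lin.sw_fun (fun a b => ⟨fun _ _ => by simp [add_smul], fun _ _ => by simp [mul_smul]⟩)
      _).toLinearMap
  have hs : Function.Surjective Θ := fun h =>
    ⟨ρ ∘ₗ LinearMap.mulLeft k h, sw_trInt_mul hΛ h⟩
  have hi : Function.Injective Θ :=
    (LinearMap.injective_iff_surjective_of_finrank_eq_finrank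
      (Subspace.dual_finrank_eq (K := k) (V := H))).2 hs
  have key : ∀ {τ : H →ₗ[k] k}, IsRightInt k τ → Θ τ = τ Λ • 1 := fun hτ => by
    have := sw_rightInt_mul hΛ hτ 1
    simp only [one_mul] at this
    exact this
  apply hi
  rw [map_smul, key hτ, key trInt_isRightInt, trInt_integral hΛ, one_smul]

/-- The distinguished grouplike element. -/
lemma exists_distinguished : ∃ g : H, IsGroupLikeElem k g ∧
    ∀ h, sw k (fun a b => ρ b • a) h = ρ h • g := by
  let g := sw k (fun a b => ρ b • a) Λ
  have hg : ∀ h, sw k (fun a b => ρ b • a) h = ρ h • g := fun h => by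
    refine eq_of_dual (k := k) fun f => ?_
    let τ : H →ₗ[k] k := (show Lin k fun h => sw k (fun a b => ρ b • f a) h by
      fun_prop).toLinearMap
    have hτ : IsRightInt k τ := fun h => by
      change sw k (fun x c => sw k (fun a b => ρ b • f a) x • c) h = sw k (fun a b => ρ b • f a) h • 1
      have e1 : ∀ x c : H, sw k (fun a b => ρ b • f a) x • c = sw k (fun a b => f a • (ρ b • c)) x := by
        intro x c
        rw [Lin.map_sw (L := fun t : k => t • c) (by fun_prop)]
        refine sw_congr _ fun a b => ?_
        rw [smul_eq_mul, mul_comm, mul_smul]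
      simp only [e1]
      rw [← sw_assoc (t := fun a b c : H => f a • (ρ b • c)) (by fun_prop) (by fun_prop) (by fun_prop)]
      refine sw_congr _ fun a y => ?_
      rw [← trInt_isRightInt, ← Lin.map_sw (L := fun t : H => f a • t) (by fun_prop)]
    have := LinearMap.congr_fun (hτ.eq_smul hΛ) h
    rw [map_smul, (Lin.coe f).map_sw, (Lin.coe f).map_sw]
    simp only [map_smul]
    rw [smul_eq_mul, mul_comm]
    exact this
  refine ⟨g, ⟨?_, ?_⟩, hg⟩
  · have := sw_counit_left (k := k) (f := fun x : H => ρ x) (by fun_prop) Λ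
    rw [trInt_integral hΛ] at this
    rw [(Lin.coe ε).map_sw, ← this]
    refine sw_congr _ fun a b => ?_
    rw [map_smul, smul_eq_mul, smul_eq_mul, mul_comm]
  · have e1 : ∀ x b : H, comul (R := k) (ρ b • x) = sw k (fun p q => ρ b • (p ⊗ₜ[k] q)) x :=
      fun x b => by
        rw [map_smul, ← sw_tmul, Lin.map_sw (L := fun t => ρ b • t) (by fun_prop)]
    rw [(Lin.coe (comul (R := k) (A := H))).map_sw]
    simp only [e1]
    rw [← sw_assoc (t := fun p q b : H => ρ b • (p ⊗ₜ[k] q)) (by fun_prop) (by fun_prop)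
      (by fun_prop)]
    have e2 : ∀ p y : H, sw k (fun q b => ρ b • (p ⊗ₜ[k] q)) y = (ρ y • p) ⊗ₜ[k] g := fun p y => by
      rw [smul_tmul, ← hg, Lin.map_sw (L := fun t => p ⊗ₜ[k] t) (by fun_prop)]
      simp only [tmul_smul]
    simp only [e2]
    rw [← Lin.map_sw (L := fun t => t ⊗ₜ[k] g) (by fun_prop)]

lemma antipode_integral : S Λ = Λ := by
  have h1 : ∀ y, S Λ * y = ε y • S Λ := fun y => by
    obtain ⟨x, rfl⟩ := (antipode_bijective hΛ).2 y
    rw [← antipode_mul_antidistrib, hΛ.mul_left, map_smul, counit_antipode]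
  have h2 := h1 Λ
  rw [hΛ.mul_left, hΛ.counit, counit_antipode, hΛ.counit, one_smul, one_smul] at h2
  exact h2.symm

/-- Precomposing with the antipode turns left integrals into right integrals. -/
lemma isRightInt_comp_antipode {τ : H →ₗ[k] k}
    (hτ : ∀ h, sw k (fun a b => τ b • a) h = τ h • 1) : IsRightInt k (τ ∘ₗ S) := fun x => by
  apply (antipode_bijective hΛ).1
  rw [(Lin.coe S).map_sw, map_smul, antipode_one]
  refine Eq.trans ?_ (hτ (S x))
  rw [sw_antipode (f := fun a b => τ b • a) (by fun_prop) (by fun_prop)]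
  simp

lemma exists_antipode_pow_four : ∃ g : H, IsGroupLikeElem k g ∧
    ∀ x, S (S (S (S x))) * g = g * x := by
  obtain ⟨g, hgl, hg⟩ := exists_distinguished hΛ
  refine ⟨g, hgl, ?_⟩
  have g1 : g * S g = 1 := hgl.mul_antipode_cancel
  have g2 : S g * g = 1 := hgl.antipode_mul_cancel
  have g3 : S (S g) = g := hgl.antipode_antipode
  let τ : H →ₗ[k] k := ρ ∘ₗ LinearMap.mulRight k g
  have hτ : ∀ h, sw k (fun a b => τ b • a) h = τ h • 1 := fun h => by
    have := hg (h * g)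
    rw [sw_mul (by fun_prop) (by fun_prop)] at this
    have e : ∀ a b : H, sw k (fun c d => ρ (b * d) • (a * c)) g = ρ (b * g) • (a * g) := fun a b => by
      rw [sw_eq_sum (by fun_prop) (by fun_prop) g {()} (fun _ => g) (fun _ => g)
        (by simpa using hgl.comul_eq_tmul_self)]
      simp
    simp only [e] at this
    have := congrArg (fun x => x * S g) this
    rw [Lin.map_sw (L := fun x => x * S g) (by fun_prop)] at this
    simp only [smul_mul_assoc, mul_assoc, g1, mul_one] at this
    exact this
  have key : ∀ x, ρ (S x * g) = ρ x := fun x => by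
    have := LinearMap.congr_fun ((isRightInt_comp_antipode hΛ hτ).eq_smul hΛ) x
    simpa [τ, antipode_integral hΛ, hΛ.mul_right, hgl.counit_eq_one, trInt_integral hΛ] using this
  have main : ∀ x, S g * S (S (S (S x))) * g = x := fun x => by
    refine eq_of_trInt_mul hΛ fun y => ?_
    symm
    rw [← key (x * y), antipode_mul_antidistrib, mul_assoc, trInt_mul_comm,
      antipode_mul_antidistrib, antipode_mul_antidistrib, g3]
    have : S (S (S x)) * g * S y = S (g * y * S g * S (S x)) * g := by
      simp only [antipode_mul_antidistrib, g3, mul_assoc, g2, mul_one]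
    rw [this, key, mul_assoc (g * y), trInt_mul_comm]
    simp only [antipode_mul_antidistrib, g3, mul_assoc]
  intro x
  conv_rhs => rw [← main x]
  rw [← mul_assoc, ← mul_assoc, g1, one_mul]

/-- The square of the antipode has finite order. -/
lemma exists_antipode_sq_pow : ∃ n, 0 < n ∧ (S ∘ₗ S : Module.End k H) ^ n = 1 := by
  obtain ⟨g, hgl, hg⟩ := exists_antipode_pow_four hΛ
  have g1 : g * S g = 1 := hgl.mul_antipode_cancel
  obtain ⟨n, hn, hgn⟩ : ∃ n, 0 < n ∧ g ^ n = 1 := by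
    have hfin : Finite {a : H | IsGroupLikeElem k a} :=
      (linearIndepOn_isGroupLikeElem (R := k) (A := H)).linearIndependent.finite
    obtain ⟨a, b, hab, h⟩ := Finite.exists_ne_map_eq_of_infinite
      (fun n : ℕ => (⟨g ^ n, hgl.pow⟩ : {a : H | IsGroupLikeElem k a}))
    have h : g ^ a = g ^ b := congrArg Subtype.val h
    have hu : IsUnit g := hgl.isUnit
    rcases lt_or_gt_of_ne hab with hlt | hlt
    · refine ⟨b - a, by omega, (hu.pow a).mul_left_cancel ?_⟩
      rw [← pow_add, mul_one, h]; congr 1; omega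
    · refine ⟨a - b, by omega, (hu.pow b).mul_left_cancel ?_⟩
      rw [← pow_add, mul_one, ← h]; congr 1; omega
  have hp : ∀ m x, ((S ∘ₗ S : Module.End k H) ^ (2 * m)) x * g ^ m = g ^ m * x := by
    intro m
    induction m with
    | zero => simp
    | succ m ih =>
      intro x
      rw [mul_add, pow_add, Module.End.mul_apply, pow_succ g, ← mul_assoc, ih, mul_assoc, mul_assoc]
      exact congrArg (fun z => g ^ m * z) (hg x)
  refine ⟨2 * n, by omega, ?_⟩
  ext x
  simpa [hgn] using hp n x

end Larson
end
end MackeyPaper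

namespace MackeyPaper
noncomputable section

section Positivity

set_option linter.unusedSectionVars false

variable {k : Type*} [Field k] [CharZero k]

/-- Sums of the form `∑ |tᵢ|²` vanish only when every term does. -/
lemma eq_zero_of_sum_mul_conj {ι : Type*} (I : Finset ι) {n : ℕ} (hn : 0 < n) (s : ι → Finset k)
    (m : ι → k → ℕ) (hs : ∀ i, ∀ μ ∈ s i, μ ^ n = 1)
    (h : ∑ i ∈ I, (∑ μ ∈ s i, m i μ * μ) * (∑ μ ∈ s i, m i μ * μ ^ (n - 1)) = 0) :
    ∀ i ∈ I, ∑ μ ∈ s i, (m i μ : k) * μ = 0 := by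
  let A := algebraicClosure ℚ k
  have : Algebra.IsAlgebraic ℚ A := algebraicClosure.isAlgebraic ℚ k
  let σ : A →ₐ[ℚ] ℂ := IsAlgClosed.lift
  have hA : ∀ μ : k, μ ^ n = 1 → μ ∈ A := fun μ hμ => by
    rw [mem_algebraicClosure_iff]
    refine ⟨Polynomial.X ^ n - 1, ?_, by simp [hμ]⟩
    exact (Polynomial.monic_X_pow_sub_C 1 hn.ne').ne_zero
  let ν : ∀ i, s i → A := fun i μ => ⟨μ, hA μ (hs i μ μ.2)⟩
  let t : ι → A := fun i => ∑ μ : s i, m i μ * ν i μ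
  let t' : ι → A := fun i => ∑ μ : s i, m i μ * ν i μ ^ (n - 1)
  have ht : ∀ i, (t i : k) = ∑ μ ∈ s i, m i μ * μ := fun i => by
    rw [← Finset.sum_coe_sort]; simp [t, ν]
  have ht' : ∀ i, (t' i : k) = ∑ μ ∈ s i, m i μ * μ ^ (n - 1) := fun i => by
    rw [← Finset.sum_coe_sort]; simp [t', ν]
  have hconj : ∀ i, σ (t' i) = starRingEnd ℂ (σ (t i)) := fun i => by
    simp only [t, t', map_sum, map_mul, map_natCast, map_pow]
    refine Finset.sum_congr rfl fun μ _ => ?_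
    have h1 : ν i μ ^ n = 1 := Subtype.ext (by simpa [ν] using hs i μ μ.2)
    have h2 : σ (ν i μ) ^ n = 1 := by rw [← map_pow, h1, map_one]
    have h3 : ‖σ (ν i μ)‖ = 1 := Complex.norm_eq_one_of_pow_eq_one h2 hn.ne'
    have h4 : σ (ν i μ) ^ (n - 1) * σ (ν i μ) = 1 := by
      rw [← pow_succ, Nat.sub_add_cancel hn, h2]
    rw [eq_inv_of_mul_eq_one_left h4, Complex.inv_eq_conj h3]
  have hsum : ∑ i ∈ I, t i * t' i = 0 := by
    apply Subtype.val_injective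
    simpa [ht, ht'] using h
  have hre : ∑ i ∈ I, Complex.normSq (σ (t i)) = 0 := by
    have := congrArg σ hsum
    simp only [map_sum, map_mul, hconj, Complex.mul_conj, map_zero] at this
    exact_mod_cast this
  intro i hi
  have := (Finset.sum_eq_zero_iff_of_nonneg fun i _ => Complex.normSq_nonneg _).1 hre i hi
  have h0 : t i = 0 := σ.injective (by rw [map_zero]; exact Complex.normSq_eq_zero.1 this)
  rw [← ht, h0]; rfl

variable [IsAlgClosed k]

/-- Traces of the powers of an endomorphism of finite order. -/
lemma exists_trace_pow_eq {V : Type*} [AddCommGroup V] [Module k V] [FiniteDimensional k V]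
    {u : Module.End k V} {n : ℕ} (hn : 0 < n) (hu : u ^ n = 1) :
    ∃ (s : Finset k) (m : k → ℕ), (∀ μ ∈ s, μ ^ n = 1) ∧
      ∀ j, LinearMap.trace k V (u ^ j) = ∑ μ ∈ s, m μ * μ ^ j := by
  classical
  have hsep : (Polynomial.X ^ n - 1 : Polynomial k).Separable :=
    (Polynomial.X_pow_sub_one_separable_iff).2 (by exact_mod_cast hn.ne')
  have hss : u.IsSemisimple := Module.End.isSemisimple_of_squarefree_aeval_eq_zero
    hsep.squarefree (by simp [hu])
  have hInternal : DirectSum.IsInternal (fun μ => u.eigenspace μ) := by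
    rw [DirectSum.isInternal_submodule_iff_iSupIndep_and_iSup_eq_top]
    exact ⟨u.eigenspaces_iSupIndep, hss.iSup_eigenspace_eq_top⟩
  have hfin : {μ | u.eigenspace μ ≠ ⊥}.Finite :=
    WellFoundedGT.finite_ne_bot_of_iSupIndep hInternal.submodule_iSupIndep
  have hpow : ∀ (μ : k) (j : ℕ) (x : V), x ∈ u.eigenspace μ → (u ^ j) x = μ ^ j • x := by
    intro μ j x hx
    induction j with
    | zero => simp
    | succ j ih =>
      rw [pow_succ', Module.End.mul_apply, ih, map_smul, Module.End.mem_eigenspace_iff.1 hx,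
        smul_smul, pow_succ]
  refine ⟨hfin.toFinset, fun μ => Module.finrank k (u.eigenspace μ), fun μ hμ => ?_, fun j => ?_⟩
  · obtain ⟨x, hx, hx0⟩ := Submodule.exists_mem_ne_zero_of_ne_bot (by simpa using hμ)
    have := hpow μ n x hx
    rw [hu, Module.End.one_apply] at this
    by_contra hne
    have : (μ ^ n - 1) • x = 0 := by rw [sub_smul, ← this, one_smul, sub_self]
    exact (smul_ne_zero (sub_ne_zero.2 hne) hx0) this
  · rw [LinearMap.trace_eq_sum_trace_restrict' hInternal hfin (f := u ^ j) fun μ x hx => by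
      rw [SetLike.mem_coe, hpow μ j x hx]; exact Submodule.smul_mem _ _ hx]
    refine Finset.sum_congr rfl fun μ _ => ?_
    have : ∀ h, (u ^ j).restrict (p := u.eigenspace μ) (q := u.eigenspace μ) h = μ ^ j • 1 := by
      intro h
      ext x
      exact hpow μ j x x.2
    rw [this, map_smul, LinearMap.trace_one, smul_eq_mul, mul_comm]

lemma trace_end_conj {V : Type*} [AddCommGroup V] [Module k V] [FiniteDimensional k V]
    (u w : Module.End k V) :
    LinearMap.trace k (Module.End k V) (LinearMap.mulLeft k u ∘ₗ LinearMap.mulRight k w) =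
      LinearMap.trace k V u * LinearMap.trace k V w := by
  have : LinearMap.mulLeft k u ∘ₗ LinearMap.mulRight k w =
      (dualTensorHomEquiv k V V).conj (TensorProduct.map (Module.Dual.transpose w) u) := by
    rw [LinearEquiv.conj_apply, LinearEquiv.eq_comp_toLinearMap_symm]
    ext f v x
    simp [Module.Dual.transpose]
  rw [this]
  have h := LinearMap.trace_conj' (R := k) (M := Module.Dual k V ⊗[k] V) (N := V →ₗ[k] V)
    (TensorProduct.map (Module.Dual.transpose w) u) (dualTensorHomEquiv k V V)
  refine h.trans ?_
  rw [LinearMap.trace_tensorProduct', LinearMap.trace_transpose',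
    mul_comm]

/-- An automorphism of finite order of a matrix algebra has trace of the form `|t|²`. -/
lemma exists_trace_end_algEquiv {V : Type*} [AddCommGroup V] [Module k V] [FiniteDimensional k V]
    [Nontrivial V] (φ : Module.End k V ≃ₐ[k] Module.End k V) {n : ℕ} (hn : 0 < n)
    (hφ : φ.toLinearMap ^ n = 1) :
    ∃ u : Module.End k V, u ^ n = 1 ∧ LinearMap.trace k _ φ.toLinearMap =
      LinearMap.trace k V u * LinearMap.trace k V (u ^ (n - 1)) := by
  obtain ⟨T, hT⟩ := φ.eq_linearEquivConjAlgEquiv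
  let u : Module.End k V := T.toLinearMap
  let w : Module.End k V := T.symm.toLinearMap
  have huw : u * w = 1 := by ext; simp [u, w]
  have hwu : w * u = 1 := by ext; simp [u, w]
  have hφx : ∀ x, φ x = u * x * w := fun x => by rw [hT]; rfl
  have hpow : ∀ j x, (φ.toLinearMap ^ j) x * u ^ j = u ^ j * x := by
    intro j
    induction j with
    | zero => simp
    | succ j ih =>
      intro x
      rw [pow_succ, Module.End.mul_apply, pow_succ u, ← mul_assoc, ih, AlgEquiv.toLinearMap_apply,
        hφx]
      simp only [mul_assoc, hwu, mul_one]
  obtain ⟨c, hc⟩ : ∃ c : k, u ^ n = algebraMap k _ c := by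
    have : u ^ n ∈ Subalgebra.center k (Module.End k V) := by
      rw [Subalgebra.mem_center_iff]
      intro x
      simpa [hφ] using hpow n x
    have := Algebra.IsCentral.out this
    obtain ⟨c, hc⟩ := Algebra.mem_bot.1 this
    exact ⟨c, hc.symm⟩
  obtain ⟨γ, hγ⟩ := IsAlgClosed.exists_pow_nat_eq c hn
  have hc0 : c ≠ 0 := by
    rintro rfl
    have : IsUnit (u ^ n) := IsUnit.pow n ⟨⟨u, w, huw, hwu⟩, rfl⟩
    rw [hc, map_zero] at this
    exact not_isUnit_zero this
  have hγ0 : γ ≠ 0 := by rintro rfl; rw [zero_pow hn.ne'] at hγ; exact hc0 hγ.symm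
  have hu1 : (γ⁻¹ • u) ^ n = 1 := by
    rw [smul_pow, hc, Algebra.algebraMap_eq_smul_one, smul_smul, inv_pow, hγ,
      inv_mul_cancel₀ hc0, one_smul]
  refine ⟨γ⁻¹ • u, hu1, ?_⟩
  have hw : (γ⁻¹ • u) ^ (n - 1) = γ • w := by
    have h1 : (γ⁻¹ • u) ^ (n - 1) * (γ⁻¹ • u) = 1 := by
      rw [← pow_succ, Nat.sub_add_cancel hn, hu1]
    have h2 : (γ⁻¹ • u) * (γ • w) = 1 := by
      rw [smul_mul_smul_comm, huw, inv_mul_cancel₀ hγ0, one_smul]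
    exact left_inv_eq_right_inv h1 h2
  rw [hw, ← trace_end_conj]
  congr 1
  ext x : 1
  simp [hφx, hγ0, mul_assoc]

/-- The trace of a finite order automorphism of a product of matrix algebras which preserves
an augmentation. -/
lemma trace_pi_end_ne_zero {ι : Type*} [Fintype ι] (V : ι → Type*)
    [∀ i, AddCommGroup (V i)] [∀ i, Module k (V i)] [∀ i, FiniteDimensional k (V i)]
    [∀ i, Nontrivial (V i)] (T : (Π i, Module.End k (V i)) ≃ₐ[k] (Π i, Module.End k (V i)))
    {n : ℕ} (hn : 0 < n) (hT : T.toLinearMap ^ n = 1) (e : (Π i, Module.End k (V i)) →ₐ[k] k)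
    (he : ∀ x, e (T x) = e x) : LinearMap.trace k _ T.toLinearMap ≠ 0 := by
  classical
  let E : ι → Π i, Module.End k (V i) := fun i => Pi.single i 1
  let φ : ∀ i, Module.End k (V i) →ₗ[k] Module.End k (V i) := fun i =>
    LinearMap.proj i ∘ₗ T.toLinearMap ∘ₗ LinearMap.single k (fun i => Module.End k (V i)) i
  have htr : LinearMap.trace k _ T.toLinearMap = ∑ i, LinearMap.trace k _ (φ i) := by
    have h1 : T.toLinearMap = ∑ i, (T.toLinearMap ∘ₗ LinearMap.single k (fun i => Module.End k (V i)) i) ∘ₗ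
        LinearMap.proj (φ := fun i => Module.End k (V i)) i := by
      refine LinearMap.ext fun x => ?_
      rw [LinearMap.sum_apply]
      change T x = ∑ i, T (Pi.single i (x i))
      rw [← map_sum, Finset.univ_sum_single x]
    conv_lhs => rw [h1]
    rw [map_sum]
    exact Finset.sum_congr rfl fun i _ => LinearMap.trace_comp_comm' _ _
  have hEE : ∀ i, E i * E i = E i := fun i => by simp [E, ← Pi.single_mul]
  have hcomm : ∀ i y, E i * y = y * E i := fun i y => by
    ext j : 1
    by_cases h : i = j
    · subst h; simp [E]
    · simp [E, Pi.single_eq_of_ne' h]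
  have hsingle : ∀ i y, E i * y = Pi.single i (y i) := fun i y => by
    ext j : 1
    by_cases h : i = j
    · subst h; simp [E]
    · simp [E, Pi.single_eq_of_ne' h]
  have hcentral : ∀ i, T (E i) i = 0 ∨ T (E i) i = 1 := fun i => by
    have h1 : T (E i) i ∈ Subalgebra.center k (Module.End k (V i)) := by
      rw [Subalgebra.mem_center_iff]
      intro z
      have := congrFun (congrArg T (hcomm i (T.symm (Pi.single i z)))) i
      simpa using this.symm
    obtain ⟨c, hc⟩ := Algebra.mem_bot.1 (Algebra.IsCentral.out h1)
    have h2 := congrFun (congrArg T (hEE i)) i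
    rw [map_mul, Pi.mul_apply, ← hc, ← map_mul] at h2
    have h3 : c * c = c := (algebraMap k (Module.End k (V i))).injective h2
    rcases IsIdempotentElem.iff_eq_zero_or_one.1 h3 with h | h
    · left; rw [← hc, h, map_zero]
    · right; rw [← hc, h, map_one]
  have hfix : ∀ i, T (E i) i = 1 → T (E i) = E i := fun i hi => by
    have h1 : E i * T (E i) = E i := by rw [hsingle, hi]
    have h2 : ∀ j, T (E i) * (T.toLinearMap ^ (j + 1)) (E i) = T (E i) := by
      intro j
      induction j with
      | zero => simpa using congrArg T (hEE i)
      | succ j ih =>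
        have h3 : (T.toLinearMap ^ (j + 1)) (E i) * (T.toLinearMap ^ (j + 1 + 1)) (E i) =
            (T.toLinearMap ^ (j + 1)) (E i) := by
          have hm : ∀ l x y, (T.toLinearMap ^ l) (x * y) =
              (T.toLinearMap ^ l) x * (T.toLinearMap ^ l) y := by
            intro l
            induction l with
            | zero => simp
            | succ l ihl => intro x y; simp [pow_succ', ihl]
          rw [pow_succ _ (j + 1), Module.End.mul_apply, ← hm]
          congr 1
        rw [← ih, mul_assoc, h3]
    have h3 := h2 (n - 1)
    rw [Nat.sub_add_cancel hn, hT, Module.End.one_apply, ← hcomm, h1] at h3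
    exact h3.symm
  have hblock : ∀ i, T (E i) = E i → ∀ x, T (Pi.single i x) = Pi.single i (φ i x) := by
    intro i hi x
    have h1 : E i * Pi.single i x = Pi.single i x := by rw [hsingle]; simp
    have h2 := congrArg T h1
    rw [map_mul, hi, hsingle] at h2
    exact h2.symm
  have hform : ∀ i, ∃ (s : Finset k) (m : k → ℕ), (∀ μ ∈ s, μ ^ n = 1) ∧
      LinearMap.trace k _ (φ i) = (∑ μ ∈ s, m μ * μ) * (∑ μ ∈ s, m μ * μ ^ (n - 1)) := by
    intro i
    rcases hcentral i with h0 | h1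
    · refine ⟨∅, 0, by simp, ?_⟩
      have : φ i = 0 := by
        ext x : 1
        have h1 : E i * Pi.single i x = Pi.single i x := by rw [hsingle]; simp
        have h2 := congrFun (congrArg T h1) i
        rw [map_mul, Pi.mul_apply, h0, zero_mul] at h2
        exact h2.symm
      simp [this]
    · have hb := hblock i (hfix i h1)
      have hinj : Function.Injective (φ i) := fun x y hxy => by
        have : T (Pi.single i x) = T (Pi.single i y) := by rw [hb, hb, hxy]
        exact Pi.single_injective i (T.injective this)
      let ψ : Module.End k (V i) ≃ₐ[k] Module.End k (V i) := AlgEquiv.ofBijective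
        (AlgHom.ofLinearMap (φ i) h1 fun x y => by
          apply Pi.single_injective i
          rw [← hb, Pi.single_mul, map_mul, hb, hb, ← Pi.single_mul])
        ⟨hinj, LinearMap.injective_iff_surjective.1 hinj⟩
      have hψ : ψ.toLinearMap = φ i := rfl
      have hψn : ψ.toLinearMap ^ n = 1 := by
        rw [hψ]
        have : ∀ l x, (T.toLinearMap ^ l) (Pi.single i x) = Pi.single i ((φ i ^ l) x) := by
          intro l
          induction l with
          | zero => simp
          | succ l ihl => intro x; simp [pow_succ', ihl, hb]
        ext x : 1
        apply Pi.single_injective i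
        rw [← this, hT]; rfl
      obtain ⟨u, hu, htu⟩ := exists_trace_end_algEquiv ψ hn hψn
      obtain ⟨s, m, hs, hm⟩ := exists_trace_pow_eq hn hu
      refine ⟨s, m, hs, ?_⟩
      rw [← hψ, htu, ← hm, ← pow_one u, hm 1, pow_one]
      simp
  intro hzero
  choose s m hs hm using hform
  rw [htr] at hzero
  simp only [hm] at hzero
  have hall := eq_zero_of_sum_mul_conj Finset.univ hn s m hs hzero
  obtain ⟨i, hi⟩ : ∃ i, e (E i) ≠ 0 := by
    by_contra! hcon
    have h1 : e 1 = ∑ i, e (E i) := by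
      rw [← map_sum]; congr 1; exact (Finset.univ_sum_single 1).symm
    simp [hcon] at h1
  have hei : e (E i) = 1 := by
    have := congrArg e (hEE i)
    rw [map_mul] at this
    exact mul_left_cancel₀ hi (by rw [this, mul_one])
  have hTi : T (E i) i = 1 := by
    rcases hcentral i with h0 | h1
    · exfalso
      have : E i * T (E i) = 0 := by rw [hsingle, h0, Pi.single_zero]
      have := congrArg e this
      rw [map_mul, he, hei, map_zero, one_mul] at this
      exact one_ne_zero this
    · exact h1
  have hb := hblock i (hfix i hTi)
  have : IsSimpleRing (Module.End k (V i)) := by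
    have : Nonempty (Fin (Module.finrank k (V i))) := ⟨⟨0, Module.finrank_pos⟩⟩
    let f := (LinearMap.toMatrixAlgEquiv (Module.finBasis k (V i))).symm
    exact IsSimpleRing.of_ringEquiv f.toRingEquiv inferInstance
  let e' : Module.End k (V i) →ₐ[k] k := AlgHom.ofLinearMap
    (e.toLinearMap ∘ₗ LinearMap.single k (fun i => Module.End k (V i)) i) hei fun x y => by
      change e (Pi.single i (x * y)) = e (Pi.single i x) * e (Pi.single i y)
      rw [Pi.single_mul, map_mul]
  have hid : φ i = LinearMap.id := by
    ext x : 1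
    apply (e' : Module.End k (V i) →+* k).injective
    change e (Pi.single i (φ i x)) = e (Pi.single i x)
    rw [← hb, he]
  have h0 := hm i
  rw [hall i (Finset.mem_univ i), zero_mul, hid, LinearMap.trace_id] at h0
  exact Module.finrank_pos.ne' (by exact_mod_cast h0)

/-- The trace of a finite order automorphism of a semisimple algebra which preserves
an augmentation does not vanish. -/
lemma trace_algEquiv_ne_zero {A : Type*} [Ring A] [Algebra k A] [FiniteDimensional k A]
    [IsSemisimpleRing A] (T : A ≃ₐ[k] A) {n : ℕ} (hn : 0 < n) (hT : T.toLinearMap ^ n = 1)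
    (e : A →ₐ[k] k) (he : ∀ x, e (T x) = e x) : LinearMap.trace k A T.toLinearMap ≠ 0 := by
  obtain ⟨r, d, hd, ⟨F⟩⟩ := IsSemisimpleRing.exists_algEquiv_pi_matrix_of_isAlgClosed k A
  let F' : A ≃ₐ[k] Π i : Fin r, Module.End k (Fin (d i) → k) :=
    F.trans (AlgEquiv.piCongrRight fun i => Matrix.toLinAlgEquiv')
  let T' := (F'.symm.trans T).trans F'
  have h1 : T'.toLinearMap = F'.toLinearEquiv.conj T.toLinearMap := rfl
  have := trace_pi_end_ne_zero (fun i => Fin (d i) → k) T' hn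
    (by
      have : ∀ l x, (T'.toLinearMap ^ l) x = F' ((T.toLinearMap ^ l) (F'.symm x)) := by
        intro l
        induction l with
        | zero => simp
        | succ l ih =>
          intro x
          rw [pow_succ', Module.End.mul_apply, ih, pow_succ', Module.End.mul_apply]
          simp [T']
      refine LinearMap.ext fun x => ?_
      rw [this, hT]; simp)
    (e.comp F'.symm.toAlgHom) (by intro x; simp [T', he])
  rwa [h1, LinearMap.trace_conj'] at this

end Positivity
end
end MackeyPaper

namespace MackeyPaper
noncomputable section

section Cosemisimple

open Coalgebra HopfAlgebra

set_option linter.unusedSectionVars false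

variable {k : Type} [Field k] [CharZero k] [IsAlgClosed k] {H : Type} [Ring H] [HopfAlgebra k H]

local notation "ε" => counit (R := k) (A := H)
local notation "S" => antipode k (A := H)

variable (k H) in
/-- There is a right integral on `H` normalised to `1` at the unit. -/
lemma exists_rightInt_one [FiniteDimensional k H] [IsSemisimpleRing H] :
    ∃ τ : H →ₗ[k] k, IsRightInt k τ ∧ τ 1 = 1 := by
  obtain ⟨Λ, hΛ⟩ := exists_integral k H
  obtain ⟨n, hn, hS⟩ := exists_antipode_sq_pow hΛ
  let T : H ≃ₐ[k] H := AlgEquiv.ofBijective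
    (AlgHom.ofLinearMap (S ∘ₗ S) (by simp)
      fun x y => by simp [antipode_mul_antidistrib])
    ((antipode_bijective hΛ).comp (antipode_bijective hΛ))
  have h1 : trInt k (1 : H) ≠ 0 := by
    rw [trInt_one]
    exact trace_algEquiv_ne_zero T hn hS (Bialgebra.counitAlgHom k H) fun x => by
      change ε (S (S x)) = ε x
      simp
  refine ⟨(trInt k (1 : H))⁻¹ • trInt k, fun h => ?_, by simp [h1]⟩
  have := congrArg (fun x => (trInt k (1 : H))⁻¹ • x) (trInt_isRightInt (k := k) h)
  simp only [LinearMap.smul_apply, smul_assoc]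
  rw [← this]
  exact ((Lin.smul_right Lin.id' _).map_sw _ _).symm

/-- The bilinear form `(x, y) ↦ τ (S x * y)`. -/
def bform (τ : H →ₗ[k] k) (x y : H) : k := τ (S x * y)

@[fun_prop]
lemma Lin.bform_left (τ : H →ₗ[k] k) {V : Type*} [AddCommGroup V] [Module k V] {g : V → H}
    (hg : Lin k g) (y : H) : Lin k (fun v => bform τ (g v) y) := by
  unfold bform; fun_prop

@[fun_prop]
lemma Lin.bform_right (τ : H →ₗ[k] k) {V : Type*} [AddCommGroup V] [Module k V] {g : V → H}
    (hg : Lin k g) (x : H) : Lin k (fun v => bform τ x (g v)) := by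
  unfold bform; fun_prop

lemma sw_bform {τ : H →ₗ[k] k} (hτ : IsRightInt k τ) (x y : H) :
    sw k (fun a b => bform τ b y • a) x = sw k (fun a b => bform τ x a • b) y := by
  have h1 : ∀ b : H, sw k (fun p q => sw k (fun c d => τ (S q * c) • (S p * d)) y) b =
      bform τ b y • 1 := fun b => by
    rw [bform, ← hτ, sw_mul (by fun_prop) (by fun_prop), sw_antipode (by fun_prop) (by fun_prop)]
  have h2 : sw k (fun a b => bform τ b y • a) x =
      sw k (fun a b => sw k (fun p q => sw k (fun c d => τ (S q * c) • (a * S p * d)) y) b) x := by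
    refine sw_congr _ fun a b => ?_
    have := congrArg (a * ·) (h1 b)
    simp only [mul_sw, mul_smul_comm, mul_one, ← mul_assoc] at this
    exact this.symm
  rw [h2, sw_assoc (t := fun a p q => sw k (fun c d => τ (S q * c) • (a * S p * d)) y)
    (by fun_prop) (by fun_prop) (by fun_prop)]
  have h3 : ∀ u q : H, sw k (fun a p => sw k (fun c d => τ (S q * c) • (a * S p * d)) y) u =
      ε u • sw k (fun c d => bform τ q c • d) y := fun u q => by
    refine (sw_mul_antipode (f := fun z => sw k (fun c d => τ (S q * c) • (z * d)) y)
      (by fun_prop) u).trans ?_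
    simp [bform]
  simp only [h3]
  exact sw_counit_left (f := fun q => sw k (fun c d => bform τ q c • d) y) (by fun_prop) x

lemma sw_bform_self {τ : H →ₗ[k] k} (hτ : τ 1 = 1) (x : H) :
    sw k (fun a b => bform τ a b) x = ε x := by
  refine (sw_antipode_mul (f := fun z => τ z) (by fun_prop) x).trans ?_
  simp [hτ]

end Cosemisimple
end
end MackeyPaper

namespace MackeyPaper
noncomputable section

section Subcoalgebras

open Coalgebra HopfAlgebra

set_option linter.unusedSectionVars false

variable {k : Type} [Field k] [CharZero k] [IsAlgClosed k] {H : Type} [Ring H] [HopfAlgebra k H]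
variable {V : Type*} [AddCommGroup V] [Module k V]

local notation "ε" => counit (R := k) (A := H)
local notation "S" => antipode k (A := H)

lemma IsSubcoalgebra.exists_repr {D : Submodule k H} (hD : IsSubcoalgebra k H D) {h : H}
    (hh : h ∈ D) : ∃ s : Finset (D × D),
      comul (R := k) h = ∑ p ∈ s, (p.1 : H) ⊗ₜ[k] (p.2 : H) := by
  obtain ⟨z, hz⟩ := hD h hh
  obtain ⟨s, rfl⟩ := TensorProduct.exists_finset z
  exact ⟨s, by rw [← hz, map_sum]; rfl⟩

lemma IsSubcoalgebra.sw_mem {D : Submodule k H} (hD : IsSubcoalgebra k H D) {h : H}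
    (hh : h ∈ D) {f : H → H → V} (h1 : ∀ b, Lin k (fun a => f a b))
    (h2 : ∀ a, Lin k (fun b => f a b)) (P : Submodule k V)
    (hf : ∀ a ∈ D, ∀ b ∈ D, f a b ∈ P) : sw k f h ∈ P := by
  obtain ⟨s, hs⟩ := hD.exists_repr hh
  rw [sw_eq_sum h1 h2 h s _ _ hs]
  exact Submodule.sum_mem _ fun p _ => hf _ p.1.2 _ p.2.2

lemma IsSubcoalgebra.sw_congr {D : Submodule k H} (hD : IsSubcoalgebra k H D) {h : H}
    (hh : h ∈ D) {f g : H → H → V} (h1 : ∀ b, Lin k (fun a => f a b))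
    (h2 : ∀ a, Lin k (fun b => f a b)) (h3 : ∀ b, Lin k (fun a => g a b))
    (h4 : ∀ a, Lin k (fun b => g a b))
    (hf : ∀ a ∈ D, ∀ b ∈ D, f a b = g a b) : sw k f h = sw k g h := by
  obtain ⟨s, hs⟩ := hD.exists_repr hh
  rw [sw_eq_sum h1 h2 h s _ _ hs, sw_eq_sum h3 h4 h s _ _ hs]
  exact Finset.sum_congr rfl fun p _ => hf _ p.1.2 _ p.2.2

/-- Every subcoalgebra is cut out by a central idempotent of the dual algebra. -/
lemma IsSubcoalgebra.exists_central [FiniteDimensional k H] [IsSemisimpleRing H]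
    {D : Submodule k H} (hD : IsSubcoalgebra k H D) : ∃ θ : H →ₗ[k] k,
      (∀ h, sw k (fun a b => θ b • a) h = sw k (fun a b => θ a • b) h) ∧
      (∀ h, sw k (fun a b => θ a • b) h ∈ D) ∧ ∀ h ∈ D, θ h = ε h := by
  obtain ⟨τ, hτ, hτ1⟩ := exists_rightInt_one k H
  obtain ⟨q, hq⟩ := D.subtype.exists_leftInverse_of_injective D.ker_subtype
  let p : H →ₗ[k] H := D.subtype ∘ₗ q
  have hpD : ∀ h, p h ∈ D := fun h => (q h).2
  have hp : ∀ h ∈ D, p h = h := fun h hh => congrArg Subtype.val (LinearMap.congr_fun hq ⟨h, hh⟩)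
  let t : H → H → H → k := fun a c d => sw k (fun e f => bform τ a e * bform τ f d) (p c)
  have ht1 : ∀ c d, Lin k (fun a => t a c d) := by intro c d; unfold t; fun_prop
  have ht2 : ∀ a d, Lin k (fun c => t a c d) := by intro c d; unfold t; fun_prop
  have ht3 : ∀ a c, Lin k (fun d => t a c d) := by intro c d; unfold t; fun_prop
  have hθ : Lin k (fun h : H => sw k (fun a b => sw k (fun c d => t a c d) b) h) := by fun_prop
  let mid : H → H := fun h => sw k (fun a b => sw k (fun c d =>
    sw k (fun e f => sw k (fun u w => (bform τ a e * bform τ w d) • u) f) (p c)) b) h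
  have hL : ∀ h, sw k (fun a b => hθ.toLinearMap b • a) h = mid h := fun h => by
    have e1 : sw k (fun x y : H => hθ.toLinearMap y • x) h = sw k (fun x y => sw k (fun a b =>
        sw k (fun c d => t a c d • x) b) y) h := by
      refine MackeyPaper.sw_congr _ fun x y => ?_
      simp only [Lin.toLinearMap_apply]
      refine ((Lin.smul_left Lin.id' x).map_sw (k := k) _ _).trans ?_
      exact MackeyPaper.sw_congr _ fun a b => (Lin.smul_left Lin.id' x).map_sw (k := k) _ _
    rw [e1, sw_assoc (t := fun x a b => sw k (fun c d => t a c d • x) b)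
      (by fun_prop) (by fun_prop) (by fun_prop)]
    refine MackeyPaper.sw_congr _ fun X b => ?_
    rw [sw_comm]
    refine MackeyPaper.sw_congr _ fun c d => ?_
    have e2 : ∀ x a : H, t a c d • x =
        sw k (fun e f => bform τ f d • (bform τ a e • x)) (p c) := fun x a => by
      refine ((Lin.smul_left Lin.id' x).map_sw (k := k) _ _).trans ?_
      exact MackeyPaper.sw_congr _ fun e f => by rw [mul_comm, mul_smul]
    simp only [e2]
    rw [sw_comm, sw_assoc (t := fun e u w => (bform τ X e * bform τ w d) • u)
      (by fun_prop) (by fun_prop) (by fun_prop)]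
    refine MackeyPaper.sw_congr _ fun e f => ?_
    rw [← (Lin.smul_right Lin.id' (bform τ f d)).map_sw (k := k), sw_bform hτ,
      (Lin.smul_right Lin.id' (bform τ f d)).map_sw (k := k)]
    exact MackeyPaper.sw_congr _ fun e f => by rw [mul_comm, mul_smul]
  have hR : ∀ h, sw k (fun a b => hθ.toLinearMap a • b) h = mid h := fun h => by
    have e1 : sw k (fun x y : H => hθ.toLinearMap x • y) h = sw k (fun x y => sw k (fun a b =>
        sw k (fun c d => t a c d • y) b) x) h := by
      refine MackeyPaper.sw_congr _ fun x y => ?_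
      simp only [Lin.toLinearMap_apply]
      refine ((Lin.smul_left Lin.id' y).map_sw (k := k) _ _).trans ?_
      exact MackeyPaper.sw_congr _ fun a b => (Lin.smul_left Lin.id' y).map_sw (k := k) _ _
    rw [e1, ← sw_assoc (t := fun a b y => sw k (fun c d => t a c d • y) b)
      (by fun_prop) (by fun_prop) (by fun_prop)]
    refine MackeyPaper.sw_congr _ fun a z => ?_
    rw [← sw_assoc (t := fun c d y => t a c d • y) (by fun_prop) (by fun_prop) (by fun_prop)]
    refine MackeyPaper.sw_congr _ fun c Z => ?_
    have e2 : ∀ d y : H, t a c d • y =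
        sw k (fun e f => bform τ a e • (bform τ f d • y)) (p c) := fun d y => by
      refine ((Lin.smul_left Lin.id' y).map_sw (k := k) _ _).trans ?_
      exact MackeyPaper.sw_congr _ fun e f => by rw [mul_smul]
    simp only [e2]
    rw [sw_comm]
    refine MackeyPaper.sw_congr _ fun e f => ?_
    rw [← (Lin.smul_right Lin.id' (bform τ a e)).map_sw (k := k), ← sw_bform hτ,
      (Lin.smul_right Lin.id' (bform τ a e)).map_sw (k := k)]
    exact MackeyPaper.sw_congr _ fun e f => by rw [mul_smul]
  refine ⟨hθ.toLinearMap, fun h => (hL h).trans (hR h).symm, fun h => ?_, fun h hh => ?_⟩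
  · rw [hR]
    refine Submodule.sum_mem _ fun i _ => Submodule.sum_mem _ fun j _ => ?_
    refine hD.sw_mem (hpD _) (by fun_prop) (by fun_prop) _ fun e _ f hf => ?_
    exact hD.sw_mem hf (by fun_prop) (by fun_prop) _ fun u hu w _ => D.smul_mem _ hu
  · rw [Lin.toLinearMap_apply]
    have e1 : sw k (fun a b => sw k (fun c d => t a c d) b) h =
        sw k (fun a b => sw k (fun c d => sw k (fun e f => bform τ a e * bform τ f d) c) b) h := by
      refine hD.sw_congr hh (by fun_prop) (by fun_prop) (by fun_prop) (by fun_prop)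
        fun a ha b hb => ?_
      refine hD.sw_congr hb (by fun_prop) (by fun_prop) (by fun_prop) (by fun_prop)
        fun c hc d hd => ?_
      simp only [t, hp c hc]
    rw [e1]
    have e2 : ∀ a b : H, sw k (fun c d => sw k (fun e f => bform τ a e * bform τ f d) c) b =
        bform τ a b := fun a b => by
      rw [← sw_assoc (t := fun e f d => bform τ a e * bform τ f d)
        (by fun_prop) (by fun_prop) (by fun_prop)]
      have : ∀ e z : H, sw k (fun f d => bform τ a e * bform τ f d) z = ε z • bform τ a e :=
        fun e z => by
          rw [← (Lin.mul_right Lin.id' (bform τ a e)).map_sw (k := k), sw_bform_self hτ1, mul_comm,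
            smul_eq_mul]
      simp only [this]
      exact sw_counit_right (f := fun e => bform τ a e) (by fun_prop) b
    simp only [e2]
    exact sw_bform_self hτ1 h

lemma isSubcoalgebra_iff [FiniteDimensional k H] {D : Submodule k H} :
    IsSubcoalgebra k H D ↔ ∀ φ : H →ₗ[k] k, ∀ h ∈ D,
      sw k (fun a b => φ b • a) h ∈ D ∧ sw k (fun a b => φ a • b) h ∈ D := by
  refine ⟨fun hD φ h hh => ⟨?_, ?_⟩, fun hD h hh => ?_⟩
  · exact hD.sw_mem hh (by fun_prop) (by fun_prop) _ fun a ha b _ => D.smul_mem _ ha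
  · exact hD.sw_mem hh (by fun_prop) (by fun_prop) _ fun a _ b hb => D.smul_mem _ hb
  · obtain ⟨q, hq⟩ := D.subtype.exists_leftInverse_of_injective D.ker_subtype
    let p : H →ₗ[k] H := D.subtype ∘ₗ q
    have hp : ∀ h ∈ D, p h = h := fun h hh =>
      congrArg Subtype.val (LinearMap.congr_fun hq ⟨h, hh⟩)
    let B := Module.finBasis k H
    have h1 : comul (R := k) h = ∑ i, sw k (fun a b => B.coord i b • a) h ⊗ₜ[k] B i := by
      rw [← sw_tmul]
      have : ∀ i, sw k (fun a b => B.coord i b • a) h ⊗ₜ[k] B i =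
          sw k (fun a b => (B.coord i b • a) ⊗ₜ[k] B i) h := fun i =>
        (Lin.tmul_left Lin.id' (B i)).map_sw (k := k) _ _
      simp only [this]
      simp only [sw]
      rw [Finset.sum_comm]
      refine Finset.sum_congr rfl fun x _ => ?_
      conv_lhs => rw [← B.sum_repr x.2]
      rw [tmul_sum]
      exact Finset.sum_congr rfl fun i _ => by rw [Module.Basis.coord_apply, smul_tmul]
    have h2 : comul (R := k) h = ∑ i, B i ⊗ₜ[k] sw k (fun a b => B.coord i a • b) h := by
      rw [← sw_tmul]
      have : ∀ i, B i ⊗ₜ[k] sw k (fun a b => B.coord i a • b) h =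
          sw k (fun a b => B i ⊗ₜ[k] (B.coord i a • b)) h := fun i =>
        (Lin.tmul_right Lin.id' (B i)).map_sw (k := k) _ _
      simp only [this]
      simp only [sw]
      rw [Finset.sum_comm]
      refine Finset.sum_congr rfl fun x _ => ?_
      conv_lhs => rw [← B.sum_repr x.1]
      rw [sum_tmul]
      exact Finset.sum_congr rfl fun i _ => by rw [Module.Basis.coord_apply, smul_tmul]
    have h3 : TensorProduct.map p .id (comul (R := k) h) = comul (R := k) h := by
      rw [h1, map_sum]
      exact Finset.sum_congr rfl fun i _ => by
        rw [TensorProduct.map_tmul, hp _ (hD _ h hh).1, LinearMap.id_apply]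
    have h4 : TensorProduct.map .id p (comul (R := k) h) = comul (R := k) h := by
      rw [h2, map_sum]
      exact Finset.sum_congr rfl fun i _ => by
        rw [TensorProduct.map_tmul, hp _ (hD _ h hh).2, LinearMap.id_apply]
    refine ⟨TensorProduct.map q q (comul h), ?_⟩
    rw [← LinearMap.comp_apply, ← TensorProduct.map_comp]
    conv_rhs => rw [← h3, ← h4, ← LinearMap.comp_apply, ← TensorProduct.map_comp]
    rfl

end Subcoalgebras
end
end MackeyPaper

namespace MackeyPaper
noncomputable section

section Simples

open Coalgebra HopfAlgebra

set_option linter.unusedSectionVars false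

variable {k : Type} [Field k] [CharZero k] [IsAlgClosed k] {H : Type} [Ring H] [HopfAlgebra k H]
  [FiniteDimensional k H]

local notation "ε" => counit (R := k) (A := H)
local notation "S" => antipode k (A := H)

/-- The left hit action `h ↦ ∑ φ(h₂) h₁` of a functional. -/
def hitL (φ : H →ₗ[k] k) : H →ₗ[k] H :=
  Lin.toLinearMap (k := k) (f := fun h : H => sw k (fun a b => φ b • a) h) (by fun_prop)

/-- The right hit action `h ↦ ∑ φ(h₁) h₂` of a functional. -/
def hitR (φ : H →ₗ[k] k) : H →ₗ[k] H :=
  Lin.toLinearMap (k := k) (f := fun h : H => sw k (fun a b => φ a • b) h) (by fun_prop)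

lemma hitL_apply (φ : H →ₗ[k] k) (h : H) : hitL φ h = sw k (fun a b => φ b • a) h := rfl

lemma hitR_apply (φ : H →ₗ[k] k) (h : H) : hitR φ h = sw k (fun a b => φ a • b) h := rfl

lemma isSubcoalgebra_iff_le_comap {D : Submodule k H} : IsSubcoalgebra k H D ↔
    ∀ φ : H →ₗ[k] k, D ≤ D.comap (hitL φ) ∧ D ≤ D.comap (hitR φ) := by
  rw [isSubcoalgebra_iff]
  exact ⟨fun h φ => ⟨fun x hx => (h φ x hx).1, fun x hx => (h φ x hx).2⟩,
    fun h φ x hx => ⟨(h φ).1 hx, (h φ).2 hx⟩⟩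

lemma IsSubcoalgebra.sSup {s : Set (Submodule k H)} (hs : ∀ D ∈ s, IsSubcoalgebra k H D) :
    IsSubcoalgebra k H (sSup s) := by
  rw [isSubcoalgebra_iff_le_comap]
  intro φ
  constructor <;> refine sSup_le fun D hD => ?_
  · exact ((isSubcoalgebra_iff_le_comap.1 (hs D hD)) φ).1.trans
      (Submodule.comap_mono (le_sSup hD))
  · exact ((isSubcoalgebra_iff_le_comap.1 (hs D hD)) φ).2.trans
      (Submodule.comap_mono (le_sSup hD))

lemma IsSubcoalgebra.inf {C D : Submodule k H} (hC : IsSubcoalgebra k H C)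
    (hD : IsSubcoalgebra k H D) : IsSubcoalgebra k H (C ⊓ D) := by
  rw [isSubcoalgebra_iff] at *
  exact fun φ h hh => ⟨⟨(hC φ h hh.1).1, (hD φ h hh.2).1⟩, ⟨(hC φ h hh.1).2, (hD φ h hh.2).2⟩⟩

lemma IsSubcoalgebra.mul {C D : Submodule k H} (hC : IsSubcoalgebra k H C)
    (hD : IsSubcoalgebra k H D) : IsSubcoalgebra k H (C * D) := by
  rw [isSubcoalgebra_iff_le_comap]
  intro φ
  constructor <;> refine Submodule.mul_le.2 fun c hc d hd => ?_
  · rw [Submodule.mem_comap, hitL_apply, sw_mul (by fun_prop) (by fun_prop)]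
    refine hC.sw_mem hc (by fun_prop) (by fun_prop) _ fun a ha b _ => ?_
    refine hD.sw_mem hd (by fun_prop) (by fun_prop) _ fun a' ha' b' _ => ?_
    exact Submodule.smul_mem _ _ (Submodule.mul_mem_mul ha ha')
  · rw [Submodule.mem_comap, hitR_apply, sw_mul (by fun_prop) (by fun_prop)]
    refine hC.sw_mem hc (by fun_prop) (by fun_prop) _ fun b _ a ha => ?_
    refine hD.sw_mem hd (by fun_prop) (by fun_prop) _ fun b' _ a' ha' => ?_
    exact Submodule.smul_mem _ _ (Submodule.mul_mem_mul ha ha')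

lemma IsSubcoalgebra.map_antipode {C : Submodule k H} (hC : IsSubcoalgebra k H C) :
    IsSubcoalgebra k H (C.map S) := by
  rw [isSubcoalgebra_iff_le_comap]
  intro φ
  constructor <;> refine Submodule.map_le_iff_le_comap.2 fun c hc => ?_
  · rw [Submodule.mem_comap, Submodule.mem_comap, hitL_apply,
      sw_antipode (by fun_prop) (by fun_prop)]
    exact hC.sw_mem hc (by fun_prop) (by fun_prop) _ fun b _ a ha =>
      Submodule.smul_mem _ _ (Submodule.mem_map_of_mem ha)
  · rw [Submodule.mem_comap, Submodule.mem_comap, hitR_apply,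
      sw_antipode (by fun_prop) (by fun_prop)]
    exact hC.sw_mem hc (by fun_prop) (by fun_prop) _ fun a ha b _ =>
      Submodule.smul_mem _ _ (Submodule.mem_map_of_mem ha)

lemma IsSubcoalgebra.exists_simple {D : Submodule k H} (hD : IsSubcoalgebra k H D)
    (h0 : D ≠ ⊥) : ∃ C ≤ D, IsSimpleSubcoalgebra k H C := by
  obtain ⟨C, ⟨hC1, hC2, hC3⟩, hmin⟩ := wellFounded_lt.has_min
    {C : Submodule k H | C ≤ D ∧ IsSubcoalgebra k H C ∧ C ≠ ⊥} ⟨D, le_rfl, hD, h0⟩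
  refine ⟨C, hC1, hC2, hC3, fun E hE hE2 hE3 => ?_⟩
  by_contra hne
  exact hmin E ⟨hE.trans hC1, hE2, hE3⟩ (lt_of_le_of_ne hE hne)

lemma counit_smul_hitL {D : Submodule k H} (hD : IsSubcoalgebra k H D) {φ : H →ₗ[k] k}
    (hφ : ∀ h ∈ D, φ h = ε h) {h : H} (hh : h ∈ D) : hitL φ h = h := by
  refine (hD.sw_congr hh (f := fun a b => φ b • a) (g := fun a b => ε b • a) (by fun_prop) (by fun_prop) (by fun_prop)
    (by fun_prop) fun a _ b hb => by rw [hφ b hb]).trans ?_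
  exact sw_counit_right (f := fun a => a) (by fun_prop) h

lemma IsSubcoalgebra.exists_counit_ne_zero {D : Submodule k H} (hD : IsSubcoalgebra k H D)
    (h0 : D ≠ ⊥) : ∃ d ∈ D, ε d ≠ 0 := by
  by_contra! hcon
  refine h0 ((Submodule.eq_bot_iff _).2 fun h hh => ?_)
  rw [← counit_smul_hitL hD (φ := 0) (fun h hh => by simp [hcon h hh]) hh, hitL_apply]
  simp [sw]

lemma IsSimpleSubcoalgebra.le_or_le {C A B : Submodule k H} (hC : IsSimpleSubcoalgebra k H C)
    (hA : IsSubcoalgebra k H A) (hB : IsSubcoalgebra k H B) (h : C ≤ A ⊔ B) : C ≤ A ∨ C ≤ B := by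
  by_cases h0 : C ⊓ A = ⊥
  · right
    have hdis : Disjoint A C := (disjoint_iff.2 h0).symm
    obtain ⟨f, hf0, hf⟩ : ∃ f : H →ₗ[k] k, (∀ a ∈ A, f a = 0) ∧ ∀ c ∈ C, f c = ε c := by
      obtain ⟨A', hAA', hcA'⟩ := hdis.exists_isCompl
      refine ⟨ε ∘ₗ C.subtype ∘ₗ C.projectionOnto A' hcA'.symm, fun a ha => ?_, fun c hc => ?_⟩
      · simp [(Submodule.projectionOnto_apply_eq_zero_iff hcA'.symm).2 (hAA' ha)]
      · simp [Submodule.projectionOnto_apply_left hcA'.symm ⟨c, hc⟩]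
    intro c hc
    obtain ⟨a, ha, b, hb, hab⟩ := Submodule.mem_sup.1 (h hc)
    have h1 : hitL f c = c := counit_smul_hitL hC.1 hf hc
    have h2 : hitL f a = 0 := by
      have := hA.sw_mem ha (f := fun a b => f b • a) (by fun_prop) (by fun_prop) ⊥
        fun a _ b hb => by simp [hf0 b hb]
      exact (Submodule.mem_bot k).1 this
    rw [← h1, ← hab, map_add, h2, zero_add]
    exact (isSubcoalgebra_iff_le_comap.1 hB f).1 hb
  · left
    exact inf_eq_left.1 (hC.2.2 _ inf_le_left (hC.1.inf hA) h0)

lemma IsSimpleSubcoalgebra.exists_le_of_le_sSup {C : Submodule k H}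
    (hC : IsSimpleSubcoalgebra k H C) {s : Set (Submodule k H)}
    (hs : ∀ D ∈ s, IsSubcoalgebra k H D) (h : C ≤ sSup s) : ∃ D ∈ s, C ≤ D := by
  classical
  obtain ⟨t, hts, ht⟩ := CompleteLattice.WellFoundedGT.isSupFiniteCompact (Submodule k H) s
  rw [ht] at h
  clear ht
  revert hts h
  induction t using Finset.induction_on with
  | empty => intro h _; exact absurd (le_bot_iff.1 (by simpa using h)) hC.2.1
  | insert D t hD ih =>
    intro h hts
    rw [Finset.sup_insert] at h
    have ht : IsSubcoalgebra k H (t.sup id) := by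
      rw [Finset.sup_id_eq_sSup]
      exact IsSubcoalgebra.sSup fun E hE => hs E (hts (by simpa using Or.inr hE))
    rcases hC.le_or_le (hs D (hts (by simp))) ht h with h1 | h1
    · exact ⟨D, hts (by simp), h1⟩
    · exact ih h1 (fun E hE => hts (by simpa using Or.inr hE))

variable [IsSemisimpleRing H]

/-- A bicolinear projection onto a subcoalgebra. -/
lemma IsSubcoalgebra.exists_projection {D : Submodule k H} (hD : IsSubcoalgebra k H D) :
    ∃ p : H →ₗ[k] H, (∀ h, p h ∈ D) ∧ (∀ h ∈ D, p h = h) ∧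
      (∀ E, IsSubcoalgebra k H E → ∀ h ∈ E, p h ∈ E) ∧ IsSubcoalgebra k H (LinearMap.ker p) := by
  obtain ⟨θ, h1, h2, h3⟩ := hD.exists_central
  have hLR : ∀ h, hitR θ h = hitL θ h := fun h => (h1 h).symm
  refine ⟨hitL θ, fun h => ?_, fun h hh => counit_smul_hitL hD h3 hh,
    fun E hE h hh => (isSubcoalgebra_iff_le_comap.1 hE θ).1 hh, ?_⟩
  · rw [← hLR]; exact h2 h
  · rw [isSubcoalgebra_iff_le_comap]
    intro φ
    constructor
    · intro h hh
      rw [Submodule.mem_comap, LinearMap.mem_ker, ← hLR]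
      rw [LinearMap.mem_ker, ← hLR] at hh
      have : hitR θ (hitL φ h) = hitL φ (hitR θ h) := by
        rw [hitL_apply φ, (Lin.coe (hitR θ)).map_sw, hitR_apply, (Lin.coe (hitL φ)).map_sw]
        simp only [map_smul]
        have e1 : ∀ a b : H, φ b • hitR θ a = sw k (fun u w => φ b • θ u • w) a := fun a b => by
          rw [hitR_apply]; exact (Lin.smul_right Lin.id' (φ b)).map_sw (k := k) _ _
        have e2 : ∀ a b : H, θ a • hitL φ b = sw k (fun u w => φ w • θ a • u) b := fun a b => by
          rw [hitL_apply]
          refine ((Lin.smul_right Lin.id' (θ a)).map_sw (k := k) _ _).trans ?_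
          exact MackeyPaper.sw_congr _ fun u w => smul_comm _ _ _
        simp only [e1, e2]
        exact (sw_assoc (t := fun u w b => φ b • θ u • w) (by fun_prop) (by fun_prop)
          (by fun_prop) h).symm
      rw [this, hh, map_zero]
    · intro h hh
      rw [Submodule.mem_comap, LinearMap.mem_ker]
      rw [LinearMap.mem_ker] at hh
      have : hitL θ (hitR φ h) = hitR φ (hitL θ h) := by
        rw [hitR_apply φ, (Lin.coe (hitL θ)).map_sw, hitL_apply, (Lin.coe (hitR φ)).map_sw]
        simp only [map_smul]
        have e1 : ∀ a b : H, θ b • hitR φ a = sw k (fun u w => θ b • φ u • w) a := fun a b => by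
          rw [hitR_apply]; exact (Lin.smul_right Lin.id' (θ b)).map_sw (k := k) _ _
        have e2 : ∀ a b : H, φ a • hitL θ b = sw k (fun u w => θ w • φ a • u) b := fun a b => by
          rw [hitL_apply]
          refine ((Lin.smul_right Lin.id' (φ a)).map_sw (k := k) _ _).trans ?_
          exact MackeyPaper.sw_congr _ fun u w => smul_comm _ _ _
        simp only [e1, e2]
        exact (sw_assoc (t := fun u w b => θ b • φ u • w) (by fun_prop) (by fun_prop)
          (by fun_prop) h)
      rw [this, hh, map_zero]

/-- Every subcoalgebra is a sum of simple subcoalgebras. -/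
lemma IsSubcoalgebra.le_sSup_simples {D : Submodule k H} (hD : IsSubcoalgebra k H D) :
    D ≤ SupSet.sSup {C | IsSimpleSubcoalgebra k H C ∧ C ≤ D} := by
  set E := SupSet.sSup {C | IsSimpleSubcoalgebra k H C ∧ C ≤ D} with hEdef
  have hE : IsSubcoalgebra k H E := IsSubcoalgebra.sSup fun C hC => hC.1.1
  have hED : E ≤ D := _root_.sSup_le fun C hC => hC.2
  obtain ⟨p, hp1, hp2, -, hp4⟩ := hE.exists_projection
  have h0 : D ⊓ LinearMap.ker p = ⊥ := by
    by_contra hne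
    obtain ⟨C, hC, hCs⟩ := (hD.inf hp4).exists_simple hne
    have hCE : C ≤ E := le_sSup ⟨hCs, hC.trans inf_le_left⟩
    refine hCs.2.1 ((Submodule.eq_bot_iff _).2 fun c hc => ?_)
    rw [← hp2 c (hCE hc)]
    exact (hC hc).2
  intro d hd
  have : d - p d ∈ D ⊓ LinearMap.ker p :=
    ⟨D.sub_mem hd (hED (hp1 d)), by simp [hp2 _ (hp1 d)]⟩
  rw [h0, Submodule.mem_bot, sub_eq_zero] at this
  rw [this]
  exact hp1 d

variable (k H) in
lemma isSimpleSubcoalgebra_one : IsSimpleSubcoalgebra k H 1 := by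
  obtain ⟨τ, -, hτ⟩ := exists_rightInt_one k H
  have h1 : (1 : H) ≠ 0 := by rintro h; simp [h] at hτ
  refine ⟨?_, ?_, fun D hD _ hD0 => ?_⟩
  · rw [isSubcoalgebra_iff_le_comap]
    intro φ
    constructor <;> refine Submodule.one_le.2 ?_
    · rw [Submodule.mem_comap, hitL_apply, sw_one (by fun_prop) (by fun_prop)]
      exact Submodule.smul_mem _ _ (Submodule.one_le.1 le_rfl)
    · rw [Submodule.mem_comap, hitR_apply, sw_one (by fun_prop) (by fun_prop)]
      exact Submodule.smul_mem _ _ (Submodule.one_le.1 le_rfl)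
  · exact fun h => h1 ((Submodule.mem_bot k).1 (h ▸ Submodule.one_le.1 le_rfl))
  · obtain ⟨d, hd, hd0⟩ := Submodule.exists_mem_ne_zero_of_ne_bot hD0
    obtain ⟨c, rfl⟩ := Submodule.mem_one.1 (hD hd)
    refine le_antisymm hD (Submodule.one_le.2 ?_)
    have hc : c ≠ 0 := by rintro rfl; simp at hd0
    have := D.smul_mem c⁻¹ hd
    rwa [Algebra.algebraMap_eq_smul_one, smul_smul, inv_mul_cancel₀ hc, one_smul] at this

end Simples
end
end MackeyPaper

namespace MackeyPaper
noncomputable section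

section Grading

open Coalgebra HopfAlgebra

set_option linter.unusedSectionVars false

variable {k : Type} [Field k] [CharZero k] [IsAlgClosed k] {H : Type} [Ring H] [HopfAlgebra k H]
  [FiniteDimensional k H] {G : Type} [Group G] {deg : Submodule k H → G}

lemma sSup_mul_sSup_le {s t : Set (Submodule k H)} {P : Submodule k H}
    (h : ∀ A ∈ s, ∀ B ∈ t, A * B ≤ P) : sSup s * sSup t ≤ P := by
  have h1 : ∀ A ∈ s, A * sSup t ≤ P := fun A hA => Submodule.mul_le.2 fun a ha y hy => by
    have : sSup t ≤ P.comap (LinearMap.mulLeft k a) :=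
      sSup_le fun B hB b hb => h A hA B hB (Submodule.mul_mem_mul ha hb)
    exact this hy
  refine Submodule.mul_le.2 fun x hx y hy => ?_
  have : sSup s ≤ P.comap (LinearMap.mulRight k y) :=
    sSup_le fun A hA a ha => h1 A hA (Submodule.mul_mem_mul ha hy)
  exact this hx

lemma IsSimpleSubcoalgebra.le_Hgr {C : Submodule k H} (hC : IsSimpleSubcoalgebra k H C)
    {T : Set G} (hT : deg C ∈ T) : C ≤ Hgr k H G deg T :=
  le_sSup ⟨hC, hT⟩

lemma isSubcoalgebra_Hgr (T : Set G) : IsSubcoalgebra k H (Hgr k H G deg T) :=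
  IsSubcoalgebra.sSup fun _ hC => hC.1.1

lemma IsSimpleSubcoalgebra.deg_mem {C : Submodule k H} (hC : IsSimpleSubcoalgebra k H C)
    {T : Set G} (h : C ≤ Hgr k H G deg T) : deg C ∈ T := by
  obtain ⟨D, hD, hCD⟩ := hC.exists_le_of_le_sSup (fun _ hD => hD.1.1) h
  rw [hD.1.2.2 C hCD hC.1 hC.2.1]
  exact hD.2

lemma Hgr_mono {T U : Set G} (h : T ⊆ U) : Hgr k H G deg T ≤ Hgr k H G deg U :=
  sSup_le_sSup fun _ hC => ⟨hC.1, h hC.2⟩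

lemma Hgr_singleton_inf {g g' : G} (h : g ≠ g') :
    Hgr k H G deg {g} ⊓ Hgr k H G deg {g'} = ⊥ := by
  by_contra h0
  obtain ⟨C, hC, hCs⟩ := ((isSubcoalgebra_Hgr _).inf (isSubcoalgebra_Hgr _)).exists_simple h0
  exact h ((hCs.deg_mem (hC.trans inf_le_left)).symm.trans (hCs.deg_mem (hC.trans inf_le_right)))

lemma exists_simple_of_Hgr_ne_bot {g : G} (hg : Hgr k H G deg {g} ≠ ⊥) :
    ∃ C, IsSimpleSubcoalgebra k H C ∧ deg C = g := by
  by_contra! hcon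
  exact hg (sSup_eq_bot.2 fun C hC => absurd hC.2 (hcon C hC.1))

lemma IsSimpleSubcoalgebra.le_Hgr_singleton {C : Submodule k H} (hC : IsSimpleSubcoalgebra k H C)
    {g : G} (hg : deg C = g) : C ≤ Hgr k H G deg {g} :=
  hC.le_Hgr (Set.mem_singleton_iff.2 hg)

variable [IsSemisimpleRing H]

lemma IsSubcoalgebra.le_Hgr {D : Submodule k H} (hD : IsSubcoalgebra k H D) {T : Set G}
    (h : ∀ C, IsSimpleSubcoalgebra k H C → C ≤ D → deg C ∈ T) : D ≤ Hgr k H G deg T :=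
  hD.le_sSup_simples.trans (sSup_le_sSup fun _ hC => ⟨hC.1, h _ hC.1 hC.2⟩)

/-- The projections of `H` onto its homogeneous components. -/
lemma exists_Hgr_projection (g : G) : ∃ p : H →ₗ[k] H,
    (∀ h ∈ Hgr k H G deg {g}, p h = h) ∧ ∀ g' ≠ g, ∀ h ∈ Hgr k H G deg {g'}, p h = 0 := by
  obtain ⟨p, hp1, hp2, hp3, -⟩ := (isSubcoalgebra_Hgr (deg := deg) {g}).exists_projection
  refine ⟨p, hp2, fun g' hg h hh => ?_⟩
  rw [← Submodule.mem_bot k, ← Hgr_singleton_inf (deg := deg) hg]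
  exact ⟨hp3 _ (isSubcoalgebra_Hgr _) h hh, hp1 h⟩

variable (hdeg : IsGrading k H G deg)
include hdeg

lemma Hgr_mul_le {T U W : Set G} (h : ∀ t ∈ T, ∀ u ∈ U, t * u ∈ W) :
    Hgr k H G deg T * Hgr k H G deg U ≤ Hgr k H G deg W := by
  refine sSup_mul_sSup_le fun A hA B hB => (hA.1.1.mul hB.1.1).le_Hgr fun C hC hCAB => ?_
  rw [hdeg A B C hA.1 hB.1 hC hCAB]
  exact h _ hA.2 _ hB.2

lemma deg_one : deg 1 = 1 := by
  have h1 := isSimpleSubcoalgebra_one k H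
  have := hdeg 1 1 1 h1 h1 h1 (by rw [one_mul])
  exact left_eq_mul.1 this

lemma IsSimpleSubcoalgebra.one_le_mul {C : Submodule k H} (hC : IsSimpleSubcoalgebra k H C) :
    1 ≤ C * Hgr k H G deg {(deg C)⁻¹} := by
  have hS := hC.1.map_antipode
  obtain ⟨c, hc, hc0⟩ := hC.1.exists_counit_ne_zero hC.2.1
  have h1 : (1 : Submodule k H) ≤ C * C.map (antipode k) := by
    rw [Submodule.one_le]
    have h2 : sw k (fun a b : H => a * antipode k b) c ∈ C * C.map (antipode k) :=
      hC.1.sw_mem hc (by fun_prop) (by fun_prop) _ fun a ha b hb =>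
        Submodule.mul_mem_mul ha (Submodule.mem_map_of_mem hb)
    rw [sw_mul_antipode (f := fun x => x) (by fun_prop)] at h2
    have := Submodule.smul_mem _ (counit (R := k) c)⁻¹ h2
    rwa [smul_smul, inv_mul_cancel₀ hc0, one_smul] at this
  have h2 : C * C.map (antipode k) ≤ sSup {D | ∃ F, IsSimpleSubcoalgebra k H F ∧ D = C * F} := by
    refine (mul_le_mul_right hS.le_sSup_simples C).trans ?_
    rw [← sSup_singleton (a := C)]
    refine sSup_mul_sSup_le ?_
    rintro _ rfl F hF
    exact le_sSup ⟨F, hF.1, by rw [sSup_singleton]⟩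
  obtain ⟨_, ⟨F, hF, rfl⟩, hle⟩ := (isSimpleSubcoalgebra_one k H).exists_le_of_le_sSup
    (by rintro _ ⟨F, hF, rfl⟩; exact hC.1.mul hF.1) (h1.trans h2)
  have hd := hdeg C F 1 hC hF (isSimpleSubcoalgebra_one k H) hle
  rw [deg_one hdeg] at hd
  have hF' : deg F = (deg C)⁻¹ := eq_inv_of_mul_eq_one_right hd.symm
  have hFle : F ≤ Hgr k H G deg {(deg C)⁻¹} := hF.le_Hgr_singleton hF'
  exact hle.trans (mul_le_mul_right hFle C)

lemma one_le_Hgr_mul_Hgr_inv {g : G} (hg : Hgr k H G deg {g} ≠ ⊥) :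
    1 ≤ Hgr k H G deg {g} * Hgr k H G deg {g⁻¹} := by
  obtain ⟨C, hC, rfl⟩ := exists_simple_of_Hgr_ne_bot hg
  have hCle : C ≤ Hgr k H G deg {deg C} := hC.le_Hgr_singleton rfl
  exact (hC.one_le_mul hdeg).trans (mul_le_mul_left hCle _)

lemma Hgr_inv_ne_bot {g : G} (hg : Hgr k H G deg {g} ≠ ⊥) : Hgr k H G deg {g⁻¹} ≠ ⊥ := by
  intro h
  have := one_le_Hgr_mul_Hgr_inv hdeg hg
  rw [h, Submodule.mul_bot] at this
  exact (isSimpleSubcoalgebra_one k H).2.1 (le_bot_iff.1 this)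

lemma one_le_Hgr_inv_mul_Hgr {g : G} (hg : Hgr k H G deg {g} ≠ ⊥) :
    1 ≤ Hgr k H G deg {g⁻¹} * Hgr k H G deg {g} := by
  simpa using one_le_Hgr_mul_Hgr_inv hdeg (Hgr_inv_ne_bot hdeg hg)

variable {Ng : Subgroup G} {K : Subalgebra k H} (hK : K.toSubmodule = Hgr k H G deg ↑Ng)
include hK

lemma Hgr_le_CKsub {C : Submodule k H} (hC : IsSimpleSubcoalgebra k H C) {s : G}
    (hs : (deg C)⁻¹ * s ∈ Ng) : Hgr k H G deg {s} ≤ CKsub k H K C := by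
  have h1 := mul_le_mul_left (hC.one_le_mul hdeg) (Hgr k H G deg {s})
  rw [one_mul, mul_assoc] at h1
  refine h1.trans (mul_le_mul_right ?_ C)
  rw [hK]
  refine Hgr_mul_le hdeg ?_
  rintro _ rfl _ rfl
  exact hs

lemma CKsub_le_Hgr {C : Submodule k H} (hC : IsSimpleSubcoalgebra k H C) :
    CKsub k H K C ≤ Hgr k H G deg {s | (deg C)⁻¹ * s ∈ Ng} := by
  rw [CKsub, hK]
  refine (mul_le_mul_left (hC.le_Hgr_singleton (deg := deg) rfl) _).trans (Hgr_mul_le hdeg ?_)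
  rintro _ rfl n hn
  simpa using hn

lemma Hgr_le_conjK {Λ : H} (hΛ : IsIdempotentIntegral k H K Λ) {C : Submodule k H}
    (hC : IsSimpleSubcoalgebra k H C) {t : G} (ht : (deg C)⁻¹ * t * deg C ∈ Ng) :
    Hgr k H G deg {t} ≤ conjK k H K Λ C := by
  obtain ⟨w, hw⟩ : ∃ w : H, ∀ x ∈ Hgr k H G deg {s | (deg C)⁻¹ * s ∈ Ng},
      x * Λ = counit (R := k) x • w := by
    have key : ∀ z ∈ C * Hgr k H G deg {(deg C)⁻¹}, ∃ w : H,
        ∀ x ∈ Hgr k H G deg {s | (deg C)⁻¹ * s ∈ Ng}, z * x * Λ = counit (R := k) x • w := by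
      intro z hz
      induction hz using Submodule.mul_induction_on' with
      | mem_mul_mem a ha b hb =>
        refine ⟨counit (R := k) b • (a * Λ), fun x hx => ?_⟩
        have hbx : b * x ∈ K := by
          rw [← Subalgebra.mem_toSubmodule, hK]
          refine Hgr_mul_le hdeg ?_ (Submodule.mul_mem_mul hb hx)
          rintro _ rfl s hs
          exact hs
        rw [mul_assoc a, mul_assoc a, (hΛ.2.2 _ hbx).1, Bialgebra.counit_mul, mul_smul_comm,
          smul_smul, mul_comm]
      | add x _ y _ hx hy =>
        obtain ⟨w, hw⟩ := hx
        obtain ⟨w', hw'⟩ := hy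
        exact ⟨w + w', fun u hu => by rw [add_mul, add_mul, hw u hu, hw' u hu, smul_add]⟩
    obtain ⟨w, hw⟩ := key 1 (Submodule.one_le.1 (hC.one_le_mul hdeg))
    exact ⟨w, fun x hx => by rw [← hw x hx, one_mul]⟩
  refine sSup_le fun D hD => le_sSup ⟨hD.1, fun d hd _ c hc _ => ?_⟩
  have hcT : C ≤ Hgr k H G deg {s | (deg C)⁻¹ * s ∈ Ng} := hC.le_Hgr (by simp)
  have hdc : d * c ∈ Hgr k H G deg {s | (deg C)⁻¹ * s ∈ Ng} := by
    have hd' : d ∈ Hgr k H G deg {t} := hD.1.le_Hgr_singleton hD.2 hd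
    have hc' : c ∈ Hgr k H G deg {deg C} := hC.le_Hgr_singleton rfl hc
    refine Hgr_mul_le hdeg ?_ (Submodule.mul_mem_mul hd' hc')
    rintro _ rfl _ rfl
    simpa [mul_assoc] using ht
  rw [← mul_assoc, hw _ hdc, hw _ (hcT hc), Bialgebra.counit_mul, smul_smul]

/-- Homogeneous components determine the double coset. -/
lemma rep_le_of_mul_eq {Mg : Subgroup G} {L : Subalgebra k H}
    (hL : L.toSubmodule = Hgr k H G deg ↑Mg) {C D : Submodule k H}
    (hC : IsSimpleSubcoalgebra k H C) (hD : IsSimpleSubcoalgebra k H D) {m m' g : G}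
    (hm : m ∈ Mg) (hm' : m' ∈ Mg) (hm0 : Hgr k H G deg {m} ≠ ⊥) (hm0' : Hgr k H G deg {m'} ≠ ⊥)
    (h : (deg C)⁻¹ * (m⁻¹ * g) ∈ Ng) (h' : (deg D)⁻¹ * (m'⁻¹ * g) ∈ Ng) :
    L.toSubmodule * C * K.toSubmodule ≤ L.toSubmodule * D * K.toSubmodule := by
  let X : G → Submodule k H := fun g => Hgr k H G deg {g}
  have hXX : ∀ a b, X a * X b ≤ X (a * b) := fun a b =>
    Hgr_mul_le hdeg (by rintro _ rfl _ rfl; rfl)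
  have hCX : C ≤ X (deg C) := hC.le_Hgr_singleton rfl
  have h1 : C ≤ L.toSubmodule * D * K.toSubmodule := by
    have e1 : C ≤ X m⁻¹ * (X m' * (D * X (deg D)⁻¹) * X m'⁻¹) * X m * C := by
      calc C = 1 * C := (one_mul C).symm
        _ ≤ X m⁻¹ * X m * C := by gcongr; exact one_le_Hgr_inv_mul_Hgr hdeg hm0
        _ = X m⁻¹ * 1 * X m * C := by rw [mul_one]
        _ ≤ X m⁻¹ * (X m' * X m'⁻¹) * X m * C := by
          gcongr; exact one_le_Hgr_mul_Hgr_inv hdeg hm0'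
        _ = X m⁻¹ * (X m' * 1 * X m'⁻¹) * X m * C := by rw [mul_one]
        _ ≤ _ := by gcongr; exact hD.one_le_mul hdeg
    have e2 : X m⁻¹ * (X m' * (D * X (deg D)⁻¹) * X m'⁻¹) * X m * C =
        X m⁻¹ * X m' * D * (X (deg D)⁻¹ * X m'⁻¹ * X m * C) := by simp only [mul_assoc]
    rw [e2] at e1
    refine e1.trans ?_
    have hl : X m⁻¹ * X m' ≤ L.toSubmodule := by
      rw [hL]
      exact (hXX _ _).trans (Hgr_mono (by simpa using mul_mem (inv_mem hm) hm'))
    have hr : X (deg D)⁻¹ * X m'⁻¹ * X m * C ≤ K.toSubmodule := by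
      calc _ ≤ X ((deg D)⁻¹ * m'⁻¹ * m * deg C) := by
            refine le_trans ?_ (hXX _ _)
            gcongr
            refine le_trans ?_ (hXX _ _)
            gcongr
            exact hXX _ _
        _ ≤ _ := by
          rw [hK]
          refine Hgr_mono ?_
          rw [Set.singleton_subset_iff]
          have := mul_mem h' (inv_mem h)
          simpa [mul_assoc] using this
    gcongr
  have hLL : L.toSubmodule * L.toSubmodule ≤ L.toSubmodule :=
    Submodule.mul_le.2 fun x hx y hy => L.mul_mem hx hy
  have hKK : K.toSubmodule * K.toSubmodule ≤ K.toSubmodule :=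
    Submodule.mul_le.2 fun x hx y hy => K.mul_mem hx hy
  calc L.toSubmodule * C * K.toSubmodule
      ≤ L.toSubmodule * (L.toSubmodule * D * K.toSubmodule) * K.toSubmodule := by gcongr
    _ = (L.toSubmodule * L.toSubmodule) * D * (K.toSubmodule * K.toSubmodule) := by
      simp only [mul_assoc]
    _ ≤ _ := by gcongr

end Grading
end
end MackeyPaper

namespace MackeyPaper
noncomputable section

section Induction

open DirectSum

set_option linter.unusedSectionVars false

universe v

variable {k : Type} [Field k] {H : Type} [Ring H] [HopfAlgebra k H]

lemma CKsub_mul_mem {K : Subalgebra k H} {C : Submodule k H} {x a : H} (hx : x ∈ CKsub k H K C)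
    (ha : a ∈ K) : x * a ∈ CKsub k H K C := by
  have hKK : K.toSubmodule * K.toSubmodule ≤ K.toSubmodule :=
    Submodule.mul_le.2 fun x hx y hy => K.mul_mem hx hy
  have h : CKsub k H K C * K.toSubmodule ≤ CKsub k H K C := by
    rw [CKsub, mul_assoc]
    exact mul_le_mul_right hKK C
  exact h (Submodule.mul_mem_mul hx ha)

/-- A linear retraction of `H` onto a subspace. -/
def retract (p : Submodule k H) : H →ₗ[k] p :=
  (LinearMap.exists_leftInverse_of_injective p.subtype p.ker_subtype).choose

lemma retract_of_mem {p : Submodule k H} {x : H} (hx : x ∈ p) : retract p x = ⟨x, hx⟩ :=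
  LinearMap.congr_fun
    (LinearMap.exists_leftInverse_of_injective p.subtype p.ker_subtype).choose_spec ⟨x, hx⟩

variable (L K : Subalgebra k H) (Λ : H) (C : Submodule k H)
variable (M : Type v) [AddCommGroup M] [Module k M] [Module ↥K M] [IsScalarTower k ↥K M]

/-- The bilinear map `CK × M → CK ⊗_k M`. -/
def ckmkₗ : ↥(CKsub k H K C) →ₗ[k] M →ₗ[k] CKM k H K M C :=
  TensorProduct.mk k ↥(CKsub k H K C) M

/-- The bilinear map `L × (CK ⊗_k M) → L ⊗_k (CK ⊗_k M)`. -/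
def lcmkₗ : ↥L →ₗ[k] CKM k H K M C →ₗ[k] LCM k H L K C M :=
  TensorProduct.mk k ↥L (CKM k H K M C)

/-- The class of `l ⊗ (x ⊗ m)` in `L ⊗_{L ∩ ᶜK} ᶜM`, extended linearly to all `l x : H`. -/
def compMk : H →ₗ[k] H →ₗ[k] M →ₗ[k] Comp k H L K Λ C M :=
  (LinearMap.mk₂ k (fun (l : ↥L) x => (compRel k H L K Λ C M).mkQ ∘ₗ lcmkₗ L K C M l ∘ₗ
      ckmkₗ K C M x)
    (fun l l' x => by rw [map_add, LinearMap.add_comp, LinearMap.comp_add])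
    (fun c l x => by rw [map_smul, LinearMap.smul_comp, LinearMap.comp_smul])
    (fun l x x' => by rw [map_add, LinearMap.comp_add, LinearMap.comp_add])
    (fun c l x => by rw [map_smul, LinearMap.comp_smul, LinearMap.comp_smul])).compl₁₂
    (retract L.toSubmodule) (retract (CKsub k H K C))

variable {L K Λ C M}

lemma compMk_of_mem {l x : H} (hl : l ∈ L) (hx : x ∈ CKsub k H K C) (m : M) :
    compMk L K Λ C M l x m =
      Submodule.Quotient.mk (lcmk k H L K C M ⟨l, hl⟩ (ckmk k H K M C ⟨x, hx⟩ m)) := by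
  have h1 : retract L.toSubmodule l = ⟨l, hl⟩ := retract_of_mem hl
  have h2 : retract (CKsub k H K C) x = ⟨x, hx⟩ := retract_of_mem hx
  rw [compMk, LinearMap.compl₁₂_apply]
  erw [h1]
  rw [h2]
  rfl

lemma compMk_mul {l a x : H} (hl : l ∈ L) (ha : a ∈ L) (ha' : a ∈ conjK k H K Λ C)
    (hx : x ∈ CKsub k H K C) (hax : a * x ∈ CKsub k H K C) :
    compMk L K Λ C M (l * a) x = compMk L K Λ C M l (a * x) := by
  ext m
  rw [compMk_of_mem (mul_mem hl ha) hx, compMk_of_mem hl hax, Submodule.Quotient.eq]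
  exact Submodule.subset_span (Or.inl ⟨⟨l, hl⟩, a, ha, ha', ⟨x, hx⟩, m, hax, rfl⟩)

lemma compMk_mul_smul {l x : H} (hl : l ∈ L) (hx : x ∈ CKsub k H K C) (a : K) (m : M) :
    compMk L K Λ C M l (x * a) m = compMk L K Λ C M l x (a • m) := by
  rw [compMk_of_mem hl (CKsub_mul_mem hx a.2), compMk_of_mem hl hx, Submodule.Quotient.eq]
  exact Submodule.subset_span (Or.inr ⟨⟨l, hl⟩, ⟨x, hx⟩, a, m, CKsub_mul_mem hx a.2, rfl⟩)

variable {N : Type*} [AddCommGroup N] [Module k N]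

lemma comp_hom_ext {f g : Comp k H L K Λ C M →ₗ[k] N}
    (h : ∀ l ∈ L, ∀ x ∈ CKsub k H K C, ∀ m,
      f (compMk L K Λ C M l x m) = g (compMk L K Λ C M l x m)) : f = g := by
  refine Submodule.linearMap_qext _ ?_
  refine TensorProduct.ext' (M := ↥L) (N := CKM k H K M C) fun l w => ?_
  induction w using TensorProduct.induction_on with
  | zero =>
    have : l ⊗ₜ[k] (0 : CKM k H K M C) = 0 := TensorProduct.tmul_zero _ _
    exact (congrArg _ this).trans ((map_zero _).trans
      ((map_zero _).symm.trans (congrArg _ this).symm))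
  | tmul x m =>
    have := h l l.2 x x.2 m
    rw [compMk_of_mem l.2 x.2] at this
    exact this
  | add w w' hw hw' =>
    have : l ⊗ₜ[k] (w + w' : CKM k H K M C) = l ⊗ₜ[k] w + l ⊗ₜ[k] w' :=
      TensorProduct.tmul_add _ _ _
    refine (congrArg _ this).trans ((map_add _ _ _).trans ?_)
    exact (congrArg₂ _ hw hw').trans ((map_add _ _ _).symm.trans (congrArg _ this).symm)

lemma exists_comp_lift (F : H →ₗ[k] M →ₗ[k] N)
    (hF : ∀ (h : H) (a : K) (m : M), F (h * a) m = F h (a • m)) :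
    ∃ f : Comp k H L K Λ C M →ₗ[k] N, ∀ l ∈ L, ∀ x ∈ CKsub k H K C, ∀ m,
      f (compMk L K Λ C M l x m) = F (l * x) m := by
  let F₁ : ↥L →ₗ[k] CKM k H K M C →ₗ[k] N :=
    TensorProduct.uncurry (RingHom.id k) ↥(CKsub k H K C) M N ∘ₗ
      ((LinearMap.mul k H).compr₂ F).compl₁₂ L.val.toLinearMap (CKsub k H K C).subtype
  let F₂ : LCM k H L K C M →ₗ[k] N := TensorProduct.lift F₁
  have hF₂ : ∀ l x m, F₂ (lcmk k H L K C M l (ckmk k H K M C x m)) = F ((l : H) * x) m := by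
    intro l x m
    rfl
  refine ⟨(compRel k H L K Λ C M).liftQ F₂ ?_, fun l hl x hx m => ?_⟩
  · refine Submodule.span_le.2 ?_
    rintro _ (⟨l, a, haL, -, x, m, hax, rfl⟩ | ⟨l, x, a, m, hxa, rfl⟩)
    · rw [SetLike.mem_coe, LinearMap.mem_ker, map_sub, hF₂, hF₂, mul_assoc, sub_self]
    · rw [SetLike.mem_coe, LinearMap.mem_ker, map_sub, hF₂, hF₂, ← mul_assoc, hF, sub_self]
  · rw [compMk_of_mem hl hx]
    exact hF₂ ⟨l, hl⟩ ⟨x, hx⟩ m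

variable (K M) in
/-- The class of `h ⊗ m` in `H ⊗_K M`. -/
def indMk : H →ₗ[k] M →ₗ[k] Ind k H K M :=
  (TensorProduct.mk k H M).compr₂ ((indRel k H K M).mkQ.restrictScalars k)

lemma indMk_mul_smul (h : H) (a : K) (m : M) :
    indMk K M (h * a) m = indMk K M h (a • m) := by
  refine (Submodule.Quotient.eq _).2 ?_
  have := (indRel k H K M).smul_mem h (Submodule.subset_span ⟨a, m, rfl⟩)
  rwa [smul_sub, TensorProduct.smul_tmul', TensorProduct.smul_tmul', smul_eq_mul, smul_eq_mul,
    mul_one] at this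

lemma exists_ind_lift (F : H →ₗ[k] M →ₗ[k] N)
    (hF : ∀ (h : H) (a : K) (m : M), F (h * a) m = F h (a • m)) :
    ∃ f : Ind k H K M →ₗ[k] N, ∀ h m, f (indMk K M h m) = F h m := by
  have key : ∀ z ∈ indRel k H K M, ∀ h : H, TensorProduct.lift F (h • z) = 0 := by
    intro z hz
    induction hz using Submodule.span_induction with
    | mem z hz =>
      obtain ⟨a, m, rfl⟩ := hz
      intro h
      rw [smul_sub, TensorProduct.smul_tmul', TensorProduct.smul_tmul', map_sub,
        TensorProduct.lift.tmul, TensorProduct.lift.tmul, smul_eq_mul, smul_eq_mul, mul_one, hF,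
        sub_self]
    | zero => simp
    | add x y _ _ hx hy => intro h; rw [smul_add, map_add, hx, hy, add_zero]
    | smul a x _ hx => intro h; rw [smul_smul, hx]
  refine ⟨((indRel k H K M).restrictScalars k).liftQ (TensorProduct.lift F) (fun z hz => ?_) ∘ₗ
    (Submodule.Quotient.restrictScalarsEquiv k (indRel k H K M)).symm.toLinearMap, fun h m => rfl⟩
  simpa using key z hz 1

lemma ind_span {p : Submodule k (Ind k H K M)} (h : ∀ x m, indMk K M x m ∈ p) : p = ⊤ := by
  refine (Submodule.eq_top_iff' ).2 fun z => ?_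
  obtain ⟨z, rfl⟩ := Submodule.Quotient.mk_surjective _ z
  induction z using TensorProduct.induction_on with
  | zero => exact p.zero_mem
  | tmul x m => exact h x m
  | add x y hx hy => exact p.add_mem hx hy

end Induction

section Mackey

open DirectSum

universe v

variable {k : Type} [Field k] [CharZero k] [IsAlgClosed k] {H : Type} [Ring H] [HopfAlgebra k H]
  [FiniteDimensional k H] [IsSemisimpleRing H] {G : Type} [Group G] {deg : Submodule k H → G}
  {Mg Ng : Subgroup G} {L K : Subalgebra k H} {Λ : H} {ι : Type}
  {rep : ι → Submodule k H}
  {M : Type v} [AddCommGroup M] [Module k M] [Module ↥K M] [IsScalarTower k ↥K M]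

lemma IsDoubleCosetReps.top_le (hrep : IsDoubleCosetReps k H L K rep) :
    (⊤ : Submodule k H) ≤ ⨆ i, L.toSubmodule * CKsub k H K (rep i) := by
  have htop : IsSubcoalgebra k H ⊤ := by
    rw [isSubcoalgebra_iff_le_comap]
    simp
  refine htop.le_sSup_simples.trans (sSup_le fun D hD => ?_)
  obtain ⟨i, hi⟩ := hrep.2.2 D hD.1
  rw [mul_assoc] at hi
  exact hi.trans (le_iSup (fun i => L.toSubmodule * CKsub k H K (rep i)) i)

lemma IsDoubleCosetReps.hom_ext {N : Type*} [AddCommGroup N] [Module k N]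
    (hrep : IsDoubleCosetReps k H L K rep) {f g : H →ₗ[k] N}
    (h : ∀ i, ∀ l ∈ L, ∀ x ∈ CKsub k H K (rep i), f (l * x) = g (l * x)) : f = g := by
  have : (⊤ : Submodule k H) ≤ LinearMap.eqLocus f g :=
    hrep.top_le.trans (iSup_le fun i => Submodule.mul_le.2 fun l hl x hx => h i l hl x hx)
  exact LinearMap.ext fun x => this trivial

variable [DecidableEq ι]

lemma exists_homogeneous_inverse (hdeg : IsGrading k H G deg)
    (hL : L.toSubmodule = Hgr k H G deg ↑Mg) (hK : K.toSubmodule = Hgr k H G deg ↑Ng)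
    (hΛ : IsIdempotentIntegral k H K Λ) (hrep : IsDoubleCosetReps k H L K rep) (g : G) :
    ∃ Φ : H →ₗ[k] M →ₗ[k] ⨁ i : ι, Comp k H L K Λ (rep i) M,
      ∀ i, ∀ m ∈ Mg, ∀ s, (deg (rep i))⁻¹ * s ∈ Ng → m * s = g →
        ∀ l ∈ Hgr k H G deg {m}, ∀ x ∈ Hgr k H G deg {s}, ∀ v,
          Φ (l * x) v = DirectSum.lof k ι (fun i => Comp k H L K Λ (rep i) M) i
            (compMk L K Λ (rep i) M l x v) := by
  have hXX : ∀ a b, Hgr k H G deg {a} * Hgr k H G deg {b} ≤ Hgr k H G deg {a * b} := fun a b =>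
    Hgr_mul_le hdeg (by rintro _ rfl _ rfl; rfl)
  have hXL : ∀ m ∈ Mg, Hgr k H G deg {m} ≤ L.toSubmodule := fun m hm => by
    rw [hL]
    exact Hgr_mono (Set.singleton_subset_iff.2 hm)
  by_cases hex : ∃ j, ∃ n ∈ Mg, Hgr k H G deg {n} ≠ ⊥ ∧ (deg (rep j))⁻¹ * (n⁻¹ * g) ∈ Ng
  · obtain ⟨j, n, hn, hn0, hj⟩ := hex
    have key : ∀ z ∈ Hgr k H G deg {n} * Hgr k H G deg {n⁻¹},
        ∃ Φ : H →ₗ[k] M →ₗ[k] Comp k H L K Λ (rep j) M,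
          ∀ m ∈ Mg, ∀ s, (deg (rep j))⁻¹ * s ∈ Ng → m * s = g →
            ∀ l ∈ Hgr k H G deg {m}, ∀ x ∈ Hgr k H G deg {s},
              Φ (l * x) = compMk L K Λ (rep j) M (z * l) x := by
      intro z hz
      induction hz using Submodule.mul_induction_on' with
      | mem_mul_mem a ha b hb =>
        refine ⟨compMk L K Λ (rep j) M a ∘ₗ LinearMap.mulLeft k b,
          fun m hm s hs hg l hl x hx => ?_⟩
        have hbl : b * l ∈ Hgr k H G deg {n⁻¹ * m} := hXX _ _ (Submodule.mul_mem_mul hb hl)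
        have hblx : b * l * x ∈ Hgr k H G deg {n⁻¹ * m * s} :=
          hXX _ _ (Submodule.mul_mem_mul hbl hx)
        have hconj : b * l ∈ conjK k H K Λ (rep j) := by
          refine Hgr_le_conjK hdeg hK hΛ (hrep.1 j) ?_ hbl
          have := mul_mem hj (inv_mem hs)
          rw [← hg] at this
          simpa [mul_assoc] using this
        have hCK : b * l * x ∈ CKsub k H K (rep j) := by
          refine Hgr_le_CKsub hdeg hK (hrep.1 j) ?_ hblx
          rwa [mul_assoc n⁻¹, hg]
        rw [LinearMap.comp_apply, LinearMap.mulLeft_apply, ← mul_assoc b, mul_assoc a,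
          compMk_mul (hXL n hn ha) (hXL _ (mul_mem (inv_mem hn) hm) hbl) hconj
            (Hgr_le_CKsub hdeg hK (hrep.1 j) hs hx) hCK]
      | add z _ z' _ hz hz' =>
        obtain ⟨Φ, hΦ⟩ := hz
        obtain ⟨Φ', hΦ'⟩ := hz'
        refine ⟨Φ + Φ', fun m hm s hs hg l hl x hx => ?_⟩
        rw [LinearMap.add_apply, hΦ m hm s hs hg l hl x hx, hΦ' m hm s hs hg l hl x hx, add_mul,
          map_add, LinearMap.add_apply]
    obtain ⟨Φ, hΦ⟩ := key 1 (Submodule.one_le.1 (one_le_Hgr_mul_Hgr_inv hdeg hn0))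
    refine ⟨Φ.compr₂ (DirectSum.lof k ι (fun i => Comp k H L K Λ (rep i) M) j),
      fun i m hm s hs hg l hl x hx v => ?_⟩
    rw [LinearMap.compr₂_apply]
    by_cases hm0 : Hgr k H G deg {m} = ⊥
    · rw [hm0, Submodule.mem_bot] at hl
      simp [hl]
    have hi : (deg (rep i))⁻¹ * (m⁻¹ * g) ∈ Ng := by rwa [← hg, inv_mul_cancel_left]
    obtain rfl : i = j := hrep.2.1 i j (le_antisymm
      (rep_le_of_mul_eq hdeg hK hL (hrep.1 i) (hrep.1 j) hm hn hm0 hn0 hi hj)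
      (rep_le_of_mul_eq hdeg hK hL (hrep.1 j) (hrep.1 i) hn hm hn0 hm0 hj hi))
    rw [hΦ m hm s hs hg l hl x hx, one_mul]
  · refine ⟨0, fun i m hm s hs hg l hl x hx v => ?_⟩
    by_cases hm0 : Hgr k H G deg {m} = ⊥
    · rw [hm0, Submodule.mem_bot] at hl
      simp [hl]
    · exact absurd ⟨i, m, hm, hm0, by rwa [← hg, inv_mul_cancel_left]⟩ hex

lemma exists_inverse [Finite G] (hdeg : IsGrading k H G deg)
    (hL : L.toSubmodule = Hgr k H G deg ↑Mg) (hK : K.toSubmodule = Hgr k H G deg ↑Ng)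
    (hΛ : IsIdempotentIntegral k H K Λ) (hrep : IsDoubleCosetReps k H L K rep) :
    ∃ Ψ : H →ₗ[k] M →ₗ[k] ⨁ i : ι, Comp k H L K Λ (rep i) M,
      ∀ i, ∀ l ∈ L, ∀ x ∈ CKsub k H K (rep i), ∀ v,
        Ψ (l * x) v = DirectSum.lof k ι (fun i => Comp k H L K Λ (rep i) M) i
          (compMk L K Λ (rep i) M l x v) := by
  have := Fintype.ofFinite G
  choose Φ hΦ using exists_homogeneous_inverse (M := M) hdeg hL hK hΛ hrep
  choose p hp hp' using exists_Hgr_projection (k := k) (H := H) (deg := deg)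
  let Ψ : H →ₗ[k] M →ₗ[k] ⨁ i : ι, Comp k H L K Λ (rep i) M := ∑ g, Φ g ∘ₗ p g
  have hΨ : ∀ g, ∀ h ∈ Hgr k H G deg {g}, Ψ h = Φ g h := by
    intro g h hh
    rw [LinearMap.sum_apply, Finset.sum_eq_single g]
    · rw [LinearMap.comp_apply, hp g h hh]
    · intro g' _ hg'
      rw [LinearMap.comp_apply, hp' g' g hg'.symm h hh, map_zero]
    · simp
  refine ⟨Ψ, fun i l hl x hx v => ?_⟩
  rw [← Subalgebra.mem_toSubmodule, hL] at hl
  replace hx := CKsub_le_Hgr hdeg hK (hrep.1 i) hx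
  let A : H →ₗ[k] H →ₗ[k] M →ₗ[k] ⨁ i : ι, Comp k H L K Λ (rep i) M :=
    (LinearMap.mul k H).compr₂ Ψ
  let B : H →ₗ[k] H →ₗ[k] M →ₗ[k] ⨁ i : ι, Comp k H L K Λ (rep i) M :=
    (compMk L K Λ (rep i) M).compr₂
      (LinearMap.compRight k (DirectSum.lof k ι (fun i => Comp k H L K Λ (rep i) M) i))
  have h1 : ∀ m ∈ Mg, ∀ s, (deg (rep i))⁻¹ * s ∈ Ng →
      ∀ l ∈ Hgr k H G deg {m}, ∀ x ∈ Hgr k H G deg {s}, A l x = B l x := by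
    intro m hm s hs l hl x hx
    ext1 v
    have hlx : l * x ∈ Hgr k H G deg {m * s} :=
      Hgr_mul_le hdeg (by rintro _ rfl _ rfl; rfl) (Submodule.mul_mem_mul hl hx)
    have := hΦ (m * s) i m hm s hs rfl l hl x hx v
    rw [← hΨ _ _ hlx] at this
    exact this
  have h2 : ∀ m ∈ Mg, ∀ l ∈ Hgr k H G deg {m}, A l x = B l x := by
    intro m hm l hl
    have : Hgr k H G deg {s | (deg (rep i))⁻¹ * s ∈ Ng} ≤ LinearMap.eqLocus (A l) (B l) :=
      sSup_le fun D hD x hx => h1 m hm _ hD.2 l hl x (hD.1.le_Hgr_singleton rfl hx)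
    exact this hx
  have h3 : Hgr k H G deg ↑Mg ≤ LinearMap.eqLocus (A.flip x) (B.flip x) :=
    sSup_le fun D hD l hl => h2 _ hD.2 l (hD.1.le_Hgr_singleton rfl hl)
  exact LinearMap.congr_fun (h3 hl) v

lemma mackeyAt_Hgr [Finite G] [Module.Finite k M] (hdeg : IsGrading k H G deg)
    (hL : L.toSubmodule = Hgr k H G deg ↑Mg) (hK : K.toSubmodule = Hgr k H G deg ↑Ng)
    (hΛ : IsIdempotentIntegral k H K Λ) : MackeyAt k H L K Λ M := by
  intro ι _ rep hrep
  choose f hf using fun i => exists_comp_lift (L := L) (Λ := Λ) (C := rep i) (indMk K M)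
    indMk_mul_smul
  let π : (⨁ i : ι, Comp k H L K Λ (rep i) M) →ₗ[k] Ind k H K M := DirectSum.toModule k ι _ f
  have hπ : ∀ i, ∀ l ∈ L, ∀ x ∈ CKsub k H K (rep i), ∀ m,
      π (DirectSum.lof k ι (fun i => Comp k H L K Λ (rep i) M) i
        (compMk L K Λ (rep i) M l x m)) = indMk K M (l * x) m := by
    intro i l hl x hx m
    rw [DirectSum.toModule_lof, hf i l hl x hx]
  obtain ⟨Ψ, hΨ⟩ := exists_inverse (M := M) hdeg hL hK hΛ hrep
  have hΨK : ∀ (h : H) (a : K) (m : M), Ψ (h * a) m = Ψ h (a • m) := by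
    intro h a m
    have : Ψ.flip m ∘ₗ LinearMap.mulRight k (a : H) = Ψ.flip (a • m) := by
      refine hrep.hom_ext fun i l hl x hx => ?_
      rw [LinearMap.comp_apply, LinearMap.mulRight_apply, LinearMap.flip_apply,
        LinearMap.flip_apply, mul_assoc, hΨ i l hl _ (CKsub_mul_mem hx a.2), hΨ i l hl x hx,
        compMk_mul_smul hl hx]
    exact LinearMap.congr_fun this h
  obtain ⟨φ, hφ⟩ := exists_ind_lift Ψ hΨK
  have hφπ : φ ∘ₗ π = LinearMap.id := by
    refine DirectSum.linearMap_ext _ fun i => comp_hom_ext fun l hl x hx m => ?_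
    rw [LinearMap.comp_apply, LinearMap.comp_apply, hπ i l hl x hx, hφ, hΨ i l hl x hx]
    rfl
  have hrange : LinearMap.range π = ⊤ := by
    refine ind_span fun h m => ?_
    have : (⊤ : Submodule k H) ≤ (LinearMap.range π).comap ((indMk K M).flip m) :=
      hrep.top_le.trans (iSup_le fun i => Submodule.mul_le.2 fun l hl x hx =>
        ⟨_, hπ i l hl x hx m⟩)
    exact this trivial
  refine ⟨π, ⟨Function.LeftInverse.injective (LinearMap.congr_fun hφπ), LinearMap.range_eq_top.1 hrange⟩,
    fun i l x m => ?_⟩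
  have := hπ i l l.2 x x.2 m
  rw [compMk_of_mem l.2 x.2] at this
  exact this

end Mackey
end
end MackeyPaper

namespace MackeyPaper

noncomputable section

universe v

variable (k : Type) [Field k] [CharZero k] [IsAlgClosed k]
variable (H : Type) [Ring H] [HopfAlgebra k H]

section Statements

variable [FiniteDimensional k H] [IsSemisimpleRing H]

/-- Theorem 61: let `G` be a grading group of the fusion
category `Rep(H^*)` and let `M, N ≤ G` be any two subgroups.  Then
`(H(M), H(N))` is a Mackey pair of Hopf subalgebras of `H`.  (Here `Λ` is
the idempotent integral of `H(N)`.) -/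
theorem statement_16 (G : Type) [Group G] [Finite G]
    (deg : Submodule k H → G) (hdeg : IsGrading k H G deg)
    (Mg Ng : Subgroup G) (LM LN : Subalgebra k H)
    (hLM : LM.toSubmodule = Hgr k H G deg ↑Mg)
    (hLN : LN.toSubmodule = Hgr k H G deg ↑Ng)
    (Λ : H) (hΛ : IsIdempotentIntegral k H LN Λ) :
    IsMackeyPair.{v} k H LM LN Λ := by
  intro M _ _ _ _ _
  exact mackeyAt_Hgr hdeg hLM hLN hΛ

end Statements

end

end MackeyPaper
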